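/- arXiv:2302.01333 — 3 statements merged into one kernel-verified Lean document; each statement's English description precedes it below -/
import Mathlib

section
/- There exists an absolute constant c₀ > 0 such that the following holds. For any integers O ≥ S ≥ 5, A ≥ 3, any horizon H with H ≥ 4·log₂ S, any α ∈ (0, 1/(5H)], and any T ≥ 1, there exists a finite family ℳ of finite episodic POMDPs with horizon H, with |𝒮| ≤ S, |𝒪| ≤ O, |𝒜| = A, each of which is single-step (m = 1) α-revealing, such that for every T-episode algorithm 𝔄: max_{M∈ℳ} E_M^𝔄[Regret] ≥ c₀ · min{ (S·O^{1/2}·A·H·T/α²)^{1/2}, (S·A^{H/2}·H·T)^{1/2}, T }. -/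
open Finset

noncomputable section

/-- A finite episodic POMDP with horizon `H`, latent state space `S`, observation space `O`,
action space `A`.  Steps are indexed by `1, …, H` (paper convention). -/
structure POMDP (S O A : Type) [Fintype S] [Fintype O] [Fintype A] (H : ℕ) where
  init : S → ℝ
  init_nonneg : ∀ s, 0 ≤ init s
  init_sum : ∑ s, init s = 1
  trans : ℕ → S → A → S → ℝ
  trans_nonneg : ∀ h s a s', 0 ≤ trans h s a s'
  trans_sum : ∀ h s a, ∑ s', trans h s a s' = 1
  emit : ℕ → S → O → ℝ
  emit_nonneg : ∀ h s o, 0 ≤ emit h s o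
  emit_sum : ∀ h s, ∑ o, emit h s o = 1
  reward : ℕ → O → A → ℝ
  reward_nonneg : ∀ h o a, 0 ≤ reward h o a
  reward_le_one : ∀ h o a, reward h o a ≤ 1
  reward_total : ∀ τ : Fin H → O × A, ∑ h : Fin H, reward (h.1 + 1) (τ h).1 (τ h).2 ≤ 1

namespace POMDP

variable {S O A : Type} [Fintype S] [Fintype O] [Fintype A] {H : ℕ}

/-- `emitActProb M m h s ω a` is the probability `ℙ_M(o_{h:h+m−1} = ω | s_h = s,
a_{h:h+m−2} = a)` of observing the sequence `ω ∈ 𝒪^m` when the latent state at (1-based)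
step `h` is `s` and the action sequence `a ∈ 𝒜^{m−1}` is executed. -/
def emitActProb (M : POMDP S O A H) : (m : ℕ) → ℕ → S → (Fin m → O) → (Fin (m - 1) → A) → ℝ
  | 0, _, _, _, _ => 1
  | 1, h, s, ω, _ => M.emit h s (ω 0)
  | m + 2, h, s, ω, a =>
    M.emit h s (ω 0) *
      ∑ s' : S, M.trans h s (a ⟨0, Nat.succ_pos m⟩) s' *
        emitActProb M (m + 1) (h + 1) s' (fun i => ω i.succ) (fun i => a i.succ)

/-- The `m`-step emission–action matrix `𝕄_{h,m}` (`h` is the 1-based step index). -/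
def emitActMatrix (M : POMDP S O A H) (h m : ℕ) :
    Matrix ((Fin m → O) × (Fin (m - 1) → A)) S ℝ :=
  Matrix.of fun p s => M.emitActProb m h s p.1 p.2

/-- The set of columns of the step-(h−1) transition matrix `𝕋_{h−1}`
(the single column `μ₁` when `h = 1`). -/
def stepCols (M : POMDP S O A H) (h : ℕ) : Set (S → ℝ) :=
  if h = 1 then {fun s => M.init s}
  else {c | ∃ s' a', c = fun s => M.trans (h - 1) s' a' s}

/-- `B` is a generalized left inverse of `𝕄_{h,m}`, i.e. `B · 𝕄_{h,m} · 𝕋_{h−1} = 𝕋_{h−1}`. -/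
def IsGenLeftInv (M : POMDP S O A H) (h m : ℕ)
    (B : Matrix S ((Fin m → O) × (Fin (m - 1) → A)) ℝ) : Prop :=
  ∀ c ∈ M.stepCols h, (B * M.emitActMatrix h m).mulVec c = c

end POMDP

/-- The star-norm `‖x‖_* = (Σ_a (Σ_ω |x(ω,a)|)²)^{1/2}`. -/
def starNorm {ι κ : Type} [Fintype ι] [Fintype κ] (x : ι × κ → ℝ) : ℝ :=
  Real.sqrt (∑ a : κ, (∑ ω : ι, |x (ω, a)|) ^ 2)

/-- The `(*→1)`-operator norm `‖B‖_{*→1} = max_{‖x‖_* ≤ 1} ‖Bx‖₁`. -/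
def opNormStarOne {S ι κ : Type} [Fintype S] [Fintype ι] [Fintype κ]
    (B : Matrix S (ι × κ) ℝ) : ℝ :=
  sSup {y | ∃ x : ι × κ → ℝ, starNorm x ≤ 1 ∧ y = ∑ s, |B.mulVec x s|}

/-- The `(1→1)`-operator norm `‖B‖_{1→1} = max_{‖y‖₁ ≤ 1} ‖By‖₁`. -/
def opNormOneOne {ι₁ ι₂ : Type} [Fintype ι₁] [Fintype ι₂] (B : Matrix ι₁ ι₂ ℝ) : ℝ :=
  sSup {y | ∃ v : ι₂ → ℝ, (∑ i, |v i|) ≤ 1 ∧ y = ∑ j, |B.mulVec v j|}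

namespace POMDP
variable {S O A : Type} [Fintype S] [Fintype O] [Fintype A] {H : ℕ}

/-- `M` is `m`-step `α`-revealing. -/
def IsRevealing (M : POMDP S O A H) (m : ℕ) (α : ℝ) : Prop :=
  ∀ h ∈ Finset.Icc 1 (H - m + 1),
    ∃ B : Matrix S ((Fin m → O) × (Fin (m - 1) → A)) ℝ,
      M.IsGenLeftInv h m B ∧ opNormStarOne B ≤ 1 / α

end POMDP

/-- A history-dependent policy: a distribution over actions for every (history, observation). -/
structure Policy (O A : Type) [Fintype A] where
  act : List (O × A) → O → A → ℝ
  act_nonneg : ∀ τ o a, 0 ≤ act τ o a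
  act_sum : ∀ τ o, ∑ a, act τ o a = 1

namespace POMDP
variable {S O A : Type} [Fintype S] [Fintype O] [Fintype A] {H : ℕ}

/-- The probability `ℙ_M^π(τ)` of a full trajectory `τ = (o_1,a_1,…,o_H,a_H)`. -/
def trajProb (M : POMDP S O A H) (π : Policy O A) (τ : Fin H → O × A) : ℝ :=
  ∑ s : Fin H → S, ∏ h : Fin H,
    (if h.1 = 0 then M.init (s h)
     else
       M.trans h.1 (s ⟨h.1 - 1, Nat.lt_of_le_of_lt (Nat.sub_le _ _) h.2⟩)
         (τ ⟨h.1 - 1, Nat.lt_of_le_of_lt (Nat.sub_le _ _) h.2⟩).2 (s h)) *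
    M.emit (h.1 + 1) (s h) (τ h).1 *
    π.act ((List.ofFn τ).take h.1) (τ h).1 (τ h).2

/-- The value `V_M(π)` of a policy. -/
def value (M : POMDP S O A H) (π : Policy O A) : ℝ :=
  ∑ τ : Fin H → O × A, M.trajProb π τ * ∑ h : Fin H, M.reward (h.1 + 1) (τ h).1 (τ h).2

/-- The optimal value `V_M⋆`. -/
def optValue (M : POMDP S O A H) : ℝ := ⨆ π : Policy O A, M.value π

end POMDP

/-- A `T`-episode algorithm: a distribution over actions for every
(past episodes, within-episode history, current observation), and an output policy map. -/
structure Algorithm (O A : Type) [Fintype A] (H : ℕ) where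
  act : List (Fin H → O × A) → List (O × A) → O → A → ℝ
  act_nonneg : ∀ past hist o a, 0 ≤ act past hist o a
  act_sum : ∀ past hist o, ∑ a, act past hist o a = 1
  out : List (Fin H → O × A) → Policy O A

/-- The policy executed by algorithm `𝔄` in the episode following the past episodes `past`. -/
def Algorithm.policyAt {O A : Type} [Fintype A] {H : ℕ} (𝔄 : Algorithm O A H)
    (past : List (Fin H → O × A)) : Policy O A :=
  ⟨fun hist o a => 𝔄.act past hist o a, fun _ _ _ => 𝔄.act_nonneg _ _ _ _,
    fun _ _ => 𝔄.act_sum _ _ _⟩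

namespace POMDP
variable {S O A : Type} [Fintype S] [Fintype O] [Fintype A] {H : ℕ}

/-- The law `ℙ_M^𝔄` of the transcript `(τ^{(1)},…,τ^{(T)})`. -/
def transcriptProb (M : POMDP S O A H) (𝔄 : Algorithm O A H) {T : ℕ}
    (τs : Fin T → Fin H → O × A) : ℝ :=
  ∏ t : Fin T, M.trajProb (𝔄.policyAt ((List.ofFn τs).take t.1)) (τs t)

open Classical in
/-- `ℙ_M^𝔄(V_M⋆ − V_M(π^out) < ε)`. -/
def pacProb (M : POMDP S O A H) (𝔄 : Algorithm O A H) (T : ℕ) (ε : ℝ) : ℝ :=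
  ∑ τs : Fin T → Fin H → O × A,
    if M.optValue - M.value (𝔄.out (List.ofFn τs)) < ε then M.transcriptProb 𝔄 τs else 0

/-- The expected regret `E_M^𝔄[Σ_{t=1}^T (V_M⋆ − V_M(π^{(t)}))]`. -/
def expRegret (M : POMDP S O A H) (𝔄 : Algorithm O A H) (T : ℕ) : ℝ :=
  ∑ τs : Fin T → Fin H → O × A,
    M.transcriptProb 𝔄 τs *
      ∑ t : Fin T, (M.optValue - M.value (𝔄.policyAt ((List.ofFn τs).take t.1)))

end POMDP

/-!
The hard instances are combination locks hidden behind a selection phase. With `H = L + 1` and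
time indices `0, …, L`, the first `H/4` actions select one of about `S/2` observable leaves. During
the next `H/4` indices the learner may leave the current leaf for the lock. A secret `θ` consists of
a leaf, an entry index and a password: entering from that leaf at that index with the first password
letter leads, with probability `ε`, to the good lock state; every other entry leads to the bad one,
and one wrong letter later on turns the good state into the bad one. The lock states emit about
`O/2` symbols, uniformly in the bad state and, in the good state, with a relative tilt of size `3 α`
along a hidden sign pattern `μ ∈ {±1}^m`, `m ≈ O/4`; at the last index the tilt is constant and
known, and the positive symbols pay reward `1`. The tilt makes the model `α`-revealing, yet the good
state is worth only an extra `ε/4`, and a policy loses at least `ε/10` times its probability of not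
following the secret until the end.

The trajectory law is the law of a reference model, in which the good state is never reached, times
an explicit likelihood ratio. Call an index live while the trajectory follows the secret. For two
patterns `μ, ν` the product of the ratios has, per live index, a conditional mean of at most
`1 + O(ε² α² |corr μ ν|)`, and of `1 + O(ε²)` at the last index. As `|corr μ ν|` is of order `1/√m`
on average over the patterns, a live index costs the learner about `ε² α² / √m`, and a live end
costs `ε²`. Truncating the ratios once the total cost exceeds `1`, a second-moment argument shows:
if the expected total cost under the *reference* law is small, then under some pattern `μ` the total
cost stays at most `1` with probability at least `1/2`. The cost is made to include `2/T` per live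
end, so on this event at least half of the episodes miss the secret.

It remains to choose `θ`. A fixed trajectory can be live only for secrets with one particular leaf
and entry index, and for those only while the password agrees with the played actions. Averaged over
the `n` leaves, the `K` entry indices and all passwords, the expected cost per episode is of order
`(ε² α² / (√m A) + (ε² + 1/T) / A^{H/2}) / (n K)`. This is at most a small multiple of `1/T` when
`ε² T` is a small multiple of the minimum of `S √O A H / α²` and `S A^{H/2} H`, and the regret is
then at least a constant times `ε T`.
-/

/-! ### Laws of sequences with history-dependent kernels -/

section SequenceLaws

/-- The state reached from `b` after the entries of `l` have been processed from left to right,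
where the update `f` also sees the prefix processed before. -/
def histFold {X β : Type*} (f : β → List X → X → β) (b : β) (l : List X) : β :=
  List.reverseRecOn l b fun l x acc => f acc l x

/-- The probability of the sequence `τ` when each entry is drawn from the kernel `κ` given the
list of the previous entries. -/
def seqProb {X : Type*} (κ : List X → X → ℝ) {n : ℕ} (τ : Fin n → X) : ℝ :=
  ∏ i : Fin n, κ ((List.ofFn τ).take i.1) (τ i)

variable {X β : Type*}

@[simp] lemma histFold_nil (f : β → List X → X → β) (b : β) : histFold f b [] = b :=
  List.reverseRecOn_nil (motive := fun _ => β) ..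

@[simp] lemma histFold_append_singleton (f : β → List X → X → β) (b : β) (l : List X) (x : X) :
    histFold f b (l ++ [x]) = f (histFold f b l) l x :=
  List.reverseRecOn_concat (motive := fun _ => β) ..

lemma ofFn_snoc {n : ℕ} (τ : Fin n → X) (x : X) :
    List.ofFn (Fin.snoc τ x : Fin (n + 1) → X) = List.ofFn τ ++ [x] := by
  simp only [List.ofFn_succ', Fin.snoc_castSucc, Fin.snoc_last, List.concat_eq_append]

lemma take_ofFn_snoc_castSucc {n : ℕ} (τ : Fin n → X) (x : X) (i : Fin n) :
    (List.ofFn (Fin.snoc τ x : Fin (n + 1) → X)).take i.1 = (List.ofFn τ).take i.1 := by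
  rw [ofFn_snoc, List.take_append_of_le_length (by simp [i.2.le])]

lemma take_ofFn_snoc_last {n : ℕ} (τ : Fin n → X) (x : X) :
    (List.ofFn (Fin.snoc τ x : Fin (n + 1) → X)).take n = List.ofFn τ := by
  rw [ofFn_snoc, List.take_left' List.length_ofFn]

lemma seqProb_snoc (κ : List X → X → ℝ) {n : ℕ} (τ : Fin n → X) (x : X) :
    seqProb κ (Fin.snoc τ x : Fin (n + 1) → X) = seqProb κ τ * κ (List.ofFn τ) x := by
  simp only [seqProb, Fin.prod_univ_castSucc, Fin.val_castSucc, take_ofFn_snoc_castSucc,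
    Fin.snoc_castSucc, Fin.val_last, take_ofFn_snoc_last, Fin.snoc_last]

lemma sum_take_eq_histFold (g : List X → ℝ) {n : ℕ} (τ : Fin n → X) :
    ∑ i : Fin n, g ((List.ofFn τ).take i.1) =
      histFold (fun r l _ => r + g l) 0 (List.ofFn τ) := by
  induction n with
  | zero => simp
  | succ n ih =>
    obtain ⟨τ, x, rfl⟩ : ∃ τ' x, τ = Fin.snoc τ' x :=
      ⟨Fin.init τ, τ (Fin.last n), (Fin.snoc_init_self τ).symm⟩
    rw [ofFn_snoc, histFold_append_singleton, ← ih, Fin.sum_univ_castSucc, ← ofFn_snoc]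
    simp only [Fin.val_castSucc, Fin.val_last, take_ofFn_snoc_castSucc, take_ofFn_snoc_last]

lemma seqProb_eq_histFold (g : List X → X → ℝ) {n : ℕ} (τ : Fin n → X) :
    seqProb g τ = histFold (fun r l x => r * g l x) 1 (List.ofFn τ) := by
  induction n with
  | zero => simp [seqProb]
  | succ n ih =>
    obtain ⟨τ, x, rfl⟩ : ∃ τ' x, τ = Fin.snoc τ' x :=
      ⟨Fin.init τ, τ (Fin.last n), (Fin.snoc_init_self τ).symm⟩
    rw [ofFn_snoc, histFold_append_singleton, ← ih, seqProb_snoc]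

lemma seqProb_nonneg {κ : List X → X → ℝ} (hκ : ∀ l x, 0 ≤ κ l x) {n : ℕ} (τ : Fin n → X) :
    0 ≤ seqProb κ τ :=
  prod_nonneg fun _ _ => hκ _ _

variable [Fintype X]

lemma sum_eq_sum_snoc {n : ℕ} (F : (Fin (n + 1) → X) → ℝ) :
    ∑ τ, F τ = ∑ τ : Fin n → X, ∑ x, F (Fin.snoc τ x : Fin (n + 1) → X) := by
  rw [← (Fin.snocEquiv fun _ => X).sum_comp, Fintype.sum_prod_type_right]
  rfl

lemma sum_seqProb_succ_mul (κ : List X → X → ℝ) (Φ : List X → ℝ) (n : ℕ) :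
    ∑ τ : Fin (n + 1) → X, seqProb κ τ * Φ (List.ofFn τ) =
      ∑ τ : Fin n → X, seqProb κ τ * ∑ x, κ (List.ofFn τ) x * Φ (List.ofFn τ ++ [x]) := by
  simp only [sum_eq_sum_snoc, seqProb_snoc, ofFn_snoc, mul_sum, mul_assoc]

lemma sum_seqProb_mul_of_martingale (κ : List X → X → ℝ) (Φ : List X → ℝ) (n : ℕ)
    (hΦ : ∀ l, l.length < n → ∑ x, κ l x * Φ (l ++ [x]) = Φ l) :
    ∑ τ : Fin n → X, seqProb κ τ * Φ (List.ofFn τ) = Φ [] := by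
  induction n with
  | zero => simp [seqProb]
  | succ n ih =>
    rw [sum_seqProb_succ_mul, ← ih fun l hl => hΦ l (by omega)]
    exact sum_congr rfl fun τ _ => by rw [hΦ _ (by simp)]

lemma sum_seqProb_mul_le_of_supermartingale {κ : List X → X → ℝ} (hκ : ∀ l x, 0 ≤ κ l x)
    (Φ : List X → ℝ) (n : ℕ) (hΦ : ∀ l, l.length < n → ∑ x, κ l x * Φ (l ++ [x]) ≤ Φ l) :
    ∑ τ : Fin n → X, seqProb κ τ * Φ (List.ofFn τ) ≤ Φ [] := by
  induction n with
  | zero => simp [seqProb]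
  | succ n ih =>
    rw [sum_seqProb_succ_mul]
    refine le_trans (sum_le_sum fun τ _ => ?_) (ih fun l hl => hΦ l (by omega))
    exact mul_le_mul_of_nonneg_left (hΦ _ (by simp)) (seqProb_nonneg hκ τ)

/-- Compensating a growth factor `1 + a l` of the conditional expectation by `exp (-a l)` turns `Φ`
into a supermartingale. -/
lemma sum_seqProb_mul_exp_neg_sum_le {κ : List X → X → ℝ} (hκ : ∀ l x, 0 ≤ κ l x)
    {Φ a : List X → ℝ} (hΦ0 : ∀ l, 0 ≤ Φ l) (n : ℕ)
    (hΦ : ∀ l, l.length < n → ∑ x, κ l x * Φ (l ++ [x]) ≤ Φ l * (1 + a l)) :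
    ∑ τ : Fin n → X, seqProb κ τ *
      (Φ (List.ofFn τ) * Real.exp (-∑ i : Fin n, a ((List.ofFn τ).take i.1))) ≤ Φ [] := by
  let cost : List X → ℝ := histFold (fun r l _ => r + a l) 0
  have hcost : ∀ l x, cost (l ++ [x]) = cost l + a l := fun l x => histFold_append_singleton ..
  simp only [sum_take_eq_histFold]
  refine (sum_seqProb_mul_le_of_supermartingale hκ (fun l => Φ l * Real.exp (-cost l)) n
    fun l hl => ?_).trans (by simp [cost])
  calc ∑ x, κ l x * (Φ (l ++ [x]) * Real.exp (-cost (l ++ [x])))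
      = (∑ x, κ l x * Φ (l ++ [x])) * Real.exp (-(cost l + a l)) := by
        simp only [hcost, sum_mul, mul_assoc]
    _ ≤ Φ l * Real.exp (a l) * Real.exp (-(cost l + a l)) := by
        refine mul_le_mul_of_nonneg_right ((hΦ l hl).trans ?_) (Real.exp_pos _).le
        exact mul_le_mul_of_nonneg_left (by linarith [Real.add_one_le_exp (a l)]) (hΦ0 l)
    _ = Φ l * Real.exp (-cost l) := by
        rw [mul_assoc, ← Real.exp_add]
        congr 2
        ring

lemma sum_seqProb {κ : List X → X → ℝ} (hκ : ∀ l, ∑ x, κ l x = 1) (n : ℕ) :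
    ∑ τ : Fin n → X, seqProb κ τ = 1 := by
  simpa using sum_seqProb_mul_of_martingale κ (fun _ => 1) n fun l _ => by simp [hκ]

lemma sum_seqProb_mul_sum_eq_sum_condExp {κ : List X → X → ℝ} (hκ : ∀ l, ∑ x, κ l x = 1)
    (g : List X → X → ℝ) (n : ℕ) :
    ∑ τ : Fin n → X, seqProb κ τ * ∑ t : Fin n, g ((List.ofFn τ).take t.1) (τ t) =
      ∑ τ : Fin n → X, seqProb κ τ *
        ∑ t : Fin n, ∑ x, κ ((List.ofFn τ).take t.1) x * g ((List.ofFn τ).take t.1) x := by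
  induction n with
  | zero => simp
  | succ n ih =>
    simp only [sum_eq_sum_snoc, seqProb_snoc, Fin.sum_univ_castSucc, Fin.val_castSucc,
      take_ofFn_snoc_castSucc, Fin.snoc_castSucc, Fin.val_last, take_ofFn_snoc_last,
      Fin.snoc_last, mul_add, sum_add_distrib]
    congr 1
    · simpa only [← sum_mul, ← mul_sum, hκ, mul_one] using ih
    · refine sum_congr rfl fun τ _ => ?_
      simp only [← sum_mul, ← mul_sum, hκ, one_mul, mul_assoc]

lemma exists_sum_seqProb_mul_sum_le {ι : Type*} [Fintype ι] [Nonempty ι] {κ : List X → X → ℝ}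
    (hκ0 : ∀ l x, 0 ≤ κ l x) (hκ : ∀ l, ∑ x, κ l x = 1) {w : ι → X → ℝ} {R : ℝ}
    (hw : ∀ x, ∑ i, w i x ≤ R) (n : ℕ) :
    ∃ i, ∑ τ : Fin n → X, seqProb κ τ * ∑ t, w i (τ t) ≤ n * R / Fintype.card ι := by
  have hsum : ∑ i, ∑ τ : Fin n → X, seqProb κ τ * ∑ t, w i (τ t) ≤
      ∑ _i : ι, n * R / Fintype.card ι := by
    calc ∑ i, ∑ τ : Fin n → X, seqProb κ τ * ∑ t, w i (τ t)
        = ∑ τ : Fin n → X, seqProb κ τ * ∑ t, ∑ i, w i (τ t) := by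
          rw [sum_comm]
          refine sum_congr rfl fun τ _ => ?_
          rw [← mul_sum, sum_comm]
      _ ≤ ∑ τ : Fin n → X, seqProb κ τ * ∑ _t : Fin n, R := by
          gcongr with τ _ t
          · exact seqProb_nonneg hκ0 τ
          · exact hw (τ t)
      _ = ∑ _i : ι, n * R / Fintype.card ι := by
          rw [← sum_mul, sum_seqProb hκ]
          simp [mul_div_cancel₀]
  obtain ⟨i, -, hi⟩ := exists_le_of_sum_le univ_nonempty hsum
  exact ⟨i, hi⟩

end SequenceLaws

/-! ### Truncated likelihood ratios -/

section Truncation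

/-- The total weight of a list, frozen as soon as it exceeds `1`. -/
def stopWeight {X : Type*} (w : X → ℝ) (l : List X) : ℝ :=
  histFold (fun b _ x => if b ≤ 1 then b + w x else b) 0 l

/-- The product of the likelihood ratios `Λ`, frozen as soon as the total weight exceeds `1`. -/
def stopLik {X : Type*} (w Λ : X → ℝ) (l : List X) : ℝ :=
  histFold (fun b l x => if stopWeight w l ≤ 1 then b * Λ x else b) 1 l

/-- The indicator of the event that the total weight exceeds `1`. -/
def overflow {X : Type*} (w : X → ℝ) (l : List X) : ℝ :=
  if stopWeight w l ≤ 1 then 0 else 1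

variable {X : Type*} {w Λ Λ' : X → ℝ}

@[simp] lemma stopWeight_nil : stopWeight w [] = 0 := histFold_nil ..

@[simp] lemma stopLik_nil : stopLik w Λ [] = 1 := histFold_nil ..

lemma stopWeight_append_singleton (l : List X) (x : X) :
    stopWeight w (l ++ [x]) =
      if stopWeight w l ≤ 1 then stopWeight w l + w x else stopWeight w l :=
  histFold_append_singleton ..

lemma stopLik_append_singleton (l : List X) (x : X) :
    stopLik w Λ (l ++ [x]) =
      if stopWeight w l ≤ 1 then stopLik w Λ l * Λ x else stopLik w Λ l :=
  histFold_append_singleton ..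

lemma stopWeight_nonneg (hw : ∀ x, 0 ≤ w x) (l : List X) : 0 ≤ stopWeight w l := by
  induction l using List.reverseRecOn with
  | nil => simp
  | append_singleton l x ih =>
    rw [stopWeight_append_singleton]
    split_ifs <;> linarith [hw x]

lemma stopLik_nonneg (hΛ : ∀ x, 0 ≤ Λ x) (l : List X) : 0 ≤ stopLik w Λ l := by
  induction l using List.reverseRecOn with
  | nil => simp
  | append_singleton l x ih =>
    rw [stopLik_append_singleton]
    split_ifs
    exacts [mul_nonneg ih (hΛ x), ih]

lemma stopWeight_le_one_add {C : ℝ} (hC : 0 ≤ C) (hw : ∀ x, w x ≤ C) (l : List X) :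
    stopWeight w l ≤ 1 + C := by
  induction l using List.reverseRecOn with
  | nil => simpa using by linarith
  | append_singleton l x ih =>
    rw [stopWeight_append_singleton]
    split_ifs <;> linarith [hw x]

lemma stopWeight_le_sum (hw : ∀ x, 0 ≤ w x) (l : List X) : stopWeight w l ≤ (l.map w).sum := by
  induction l using List.reverseRecOn with
  | nil => simp
  | append_singleton l x ih =>
    simp only [stopWeight_append_singleton, List.map_append, List.sum_append, List.map_cons,
      List.map_nil, List.sum_singleton]
    split_ifs <;> linarith [hw x]

lemma stopWeight_le_one_of_append {l : List X} {x : X} (h : stopWeight w (l ++ [x]) ≤ 1) :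
    stopWeight w l ≤ 1 := by
  by_contra hl
  rw [stopWeight_append_singleton, if_neg hl] at h
  exact hl h

lemma stopWeight_eq_sum {l : List X} (h : stopWeight w l ≤ 1) :
    stopWeight w l = (l.map w).sum := by
  induction l using List.reverseRecOn with
  | nil => simp
  | append_singleton l x ih =>
    have hl := stopWeight_le_one_of_append h
    simp [stopWeight_append_singleton, hl, ← ih hl]

lemma stopLik_eq_prod {l : List X} (h : stopWeight w l ≤ 1) :
    stopLik w Λ l = (l.map Λ).prod := by
  induction l using List.reverseRecOn with
  | nil => simp
  | append_singleton l x ih =>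
    have hl := stopWeight_le_one_of_append h
    simp [stopLik_append_singleton, hl, ← ih hl]

lemma overflow_sq (w : X → ℝ) (l : List X) : overflow w l ^ 2 = overflow w l := by
  unfold overflow
  split_ifs <;> norm_num

lemma overflow_le_sum (hw : ∀ x, 0 ≤ w x) (l : List X) : overflow w l ≤ (l.map w).sum := by
  refine le_trans ?_ (stopWeight_le_sum hw l)
  unfold overflow
  split_ifs with h
  exacts [stopWeight_nonneg hw l, (not_le.mp h).le]

lemma stopLik_le_add {n : ℕ} (hΛ : ∀ x, 0 ≤ Λ x) (τ : Fin n → X) :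
    stopLik w Λ (List.ofFn τ) ≤ (if ∑ t, w (τ t) ≤ 1 then ∏ t, Λ (τ t) else 0) +
      overflow w (List.ofFn τ) * stopLik w Λ (List.ofFn τ) := by
  by_cases h : stopWeight w (List.ofFn τ) ≤ 1
  · have hsum : ∑ t, w (τ t) ≤ 1 := by
      simpa [stopWeight_eq_sum h, List.map_ofFn, List.sum_ofFn] using h
    have hprod : stopLik w Λ (List.ofFn τ) = ∏ t, Λ (τ t) := by
      simp [stopLik_eq_prod h, List.map_ofFn, List.prod_ofFn]
    simp [hsum, hprod, overflow, h]
  · have hnn : 0 ≤ if ∑ t, w (τ t) ≤ 1 then ∏ t, Λ (τ t) else 0 :=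
      ite_nonneg (prod_nonneg fun t _ => hΛ (τ t)) le_rfl
    simpa [overflow, h] using hnn

variable [Fintype X] {κ : List X → X → ℝ}

lemma sum_seqProb_mul_stopLik (hκ1 : ∀ l, ∑ x, κ l x = 1)
    (hΛ1 : ∀ l, ∑ x, κ l x * Λ x = 1) (n : ℕ) :
    ∑ τ : Fin n → X, seqProb κ τ * stopLik w Λ (List.ofFn τ) = 1 := by
  refine (sum_seqProb_mul_of_martingale κ (stopLik w Λ) n fun l _ => ?_).trans stopLik_nil
  simp only [stopLik_append_singleton]
  split_ifs
  · simp only [mul_left_comm _ (stopLik w Λ l), ← mul_sum, hΛ1, mul_one]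
  · rw [← sum_mul, hκ1, one_mul]

lemma sum_seqProb_mul_overflow_le (hκ : ∀ l x, 0 ≤ κ l x) (hw : ∀ x, 0 ≤ w x) (n : ℕ) :
    ∑ τ : Fin n → X, seqProb κ τ * overflow w (List.ofFn τ) ≤
      ∑ τ : Fin n → X, seqProb κ τ * ∑ t, w (τ t) := by
  refine sum_le_sum fun τ _ => mul_le_mul_of_nonneg_left ?_ (seqProb_nonneg hκ τ)
  simpa [List.map_ofFn, List.sum_ofFn] using overflow_le_sum hw (List.ofFn τ)

lemma sum_kernel_mul_discounted_stopLik_le (hκ1 : ∀ l, ∑ x, κ l x = 1)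
    (hΛ : ∀ x, 0 ≤ Λ x) (hΛ' : ∀ x, 0 ≤ Λ' x) {B : ℝ}
    (hB : ∀ l, ∑ x, κ l x * (Λ x * Λ' x * Real.exp (-(B * w x))) ≤ 1) (l : List X) :
    ∑ x, κ l x * (stopLik w Λ (l ++ [x]) * stopLik w Λ' (l ++ [x]) *
        Real.exp (-(B * stopWeight w (l ++ [x])))) ≤
      stopLik w Λ l * stopLik w Λ' l * Real.exp (-(B * stopWeight w l)) := by
  simp only [stopWeight_append_singleton, stopLik_append_singleton]
  split_ifs
  · set E := stopLik w Λ l * stopLik w Λ' l * Real.exp (-(B * stopWeight w l))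
    have hE : 0 ≤ E := mul_nonneg (mul_nonneg (stopLik_nonneg hΛ l) (stopLik_nonneg hΛ' l))
      (Real.exp_pos _).le
    calc _ = ∑ x, E * (κ l x * (Λ x * Λ' x * Real.exp (-(B * w x)))) := by
          refine sum_congr rfl fun x _ => ?_
          rw [mul_add, neg_add, Real.exp_add]
          ring
      _ ≤ E := by
          rw [← mul_sum]
          exact mul_le_of_le_one_right hE (hB l)
  · rw [← sum_mul, hκ1, one_mul]

lemma sum_seqProb_mul_stopLik_mul_stopLik_le (hκ : ∀ l x, 0 ≤ κ l x)
    (hκ1 : ∀ l, ∑ x, κ l x = 1) {C : ℝ} (hC : 0 ≤ C) (hw : ∀ x, w x ≤ C)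
    (hΛ : ∀ x, 0 ≤ Λ x) (hΛ' : ∀ x, 0 ≤ Λ' x) {B : ℝ} (hB0 : 0 ≤ B)
    (hB : ∀ l, ∑ x, κ l x * (Λ x * Λ' x * Real.exp (-(B * w x))) ≤ 1) (n : ℕ) :
    ∑ τ : Fin n → X, seqProb κ τ * (stopLik w Λ (List.ofFn τ) * stopLik w Λ' (List.ofFn τ)) ≤
      Real.exp ((1 + C) * B) := by
  let E (l : List X) : ℝ := stopLik w Λ l * stopLik w Λ' l
  have hdisc : ∑ τ : Fin n → X, seqProb κ τ *
      (E (List.ofFn τ) * Real.exp (-(B * stopWeight w (List.ofFn τ)))) ≤ 1 := by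
    simpa [E] using sum_seqProb_mul_le_of_supermartingale hκ
      (fun l => E l * Real.exp (-(B * stopWeight w l))) n
      fun l _ => sum_kernel_mul_discounted_stopLik_le hκ1 hΛ hΛ' hB l
  calc _ ≤ ∑ τ : Fin n → X, Real.exp ((1 + C) * B) * (seqProb κ τ *
        (E (List.ofFn τ) * Real.exp (-(B * stopWeight w (List.ofFn τ))))) := by
        refine sum_le_sum fun τ _ => ?_
        have hnn : 0 ≤ seqProb κ τ * E (List.ofFn τ) := mul_nonneg (seqProb_nonneg hκ τ)
          (mul_nonneg (stopLik_nonneg hΛ _) (stopLik_nonneg hΛ' _))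
        have hexp : 1 ≤ Real.exp ((1 + C) * B) *
            Real.exp (-(B * stopWeight w (List.ofFn τ))) := by
          rw [← Real.exp_add, Real.one_le_exp_iff]
          nlinarith [stopWeight_le_one_add hC hw (List.ofFn τ)]
        nlinarith [mul_le_mul_of_nonneg_left hexp hnn]
    _ ≤ _ := by
        rw [← mul_sum]
        exact mul_le_of_le_one_right (Real.exp_pos _).le hdisc

end Truncation

section Mixture

variable {X M : Type*} [Fintype X] [Fintype M] {κ : List X → X → ℝ} {w : X → ℝ}
  {Λ : M → X → ℝ} {B : M → M → ℝ} {C K : ℝ} {n : ℕ}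

lemma sum_seqProb_mul_sq_sum_stopLik_le (hκ : ∀ l x, 0 ≤ κ l x)
    (hκ1 : ∀ l, ∑ x, κ l x = 1) (hC : 0 ≤ C) (hw : ∀ x, w x ≤ C) (hΛ : ∀ μ x, 0 ≤ Λ μ x)
    (hB0 : ∀ μ ν, 0 ≤ B μ ν)
    (hB : ∀ μ ν l, ∑ x, κ l x * (Λ μ x * Λ ν x * Real.exp (-(B μ ν * w x))) ≤ 1) :
    ∑ τ : Fin n → X, seqProb κ τ * (∑ μ, stopLik w (Λ μ) (List.ofFn τ)) ^ 2 ≤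
      ∑ μ, ∑ ν, Real.exp ((1 + C) * B μ ν) := by
  calc _ = ∑ μ, ∑ ν, ∑ τ : Fin n → X, seqProb κ τ *
        (stopLik w (Λ μ) (List.ofFn τ) * stopLik w (Λ ν) (List.ofFn τ)) := by
        simp only [sq, sum_mul_sum]
        simp only [mul_sum]
        rw [sum_comm]
        exact sum_congr rfl fun μ _ => sum_comm
    _ ≤ _ := sum_le_sum fun μ _ => sum_le_sum fun ν _ =>
        sum_seqProb_mul_stopLik_mul_stopLik_le hκ hκ1 hC hw (hΛ μ) (hΛ ν) (hB0 μ ν) (hB μ ν) n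

/-- The contribution of the overflow event to the mixture, by the AM-GM inequality
`b Z ≤ K N b² + Z² / (4 K N)` with `b` the indicator of the event. -/
lemma sum_seqProb_mul_overflow_mul_le (hκ : ∀ l x, 0 ≤ κ l x) {N : ℝ} (hK : 0 < K) (hN : 0 < N)
    (Z : List X → ℝ)
    (hoverflow : ∑ τ : Fin n → X, seqProb κ τ * overflow w (List.ofFn τ) ≤ 1 / (4 * K))
    (hZ : ∑ τ : Fin n → X, seqProb κ τ * Z (List.ofFn τ) ^ 2 ≤ K * N ^ 2) :
    ∑ τ : Fin n → X, seqProb κ τ * (overflow w (List.ofFn τ) * Z (List.ofFn τ)) ≤ N / 2 := by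
  have hamgm (b z : ℝ) : b * z ≤ K * N * b ^ 2 + 1 / (4 * K * N) * z ^ 2 := by
    have hsq : K * N * b ^ 2 + 1 / (4 * K * N) * z ^ 2 - b * z =
        1 / (4 * K * N) * (z - 2 * K * N * b) ^ 2 := by
      field_simp
      ring
    have : 0 ≤ 1 / (4 * K * N) * (z - 2 * K * N * b) ^ 2 := by positivity
    linarith
  calc _ ≤ ∑ τ : Fin n → X, (K * N * (seqProb κ τ * overflow w (List.ofFn τ)) +
        1 / (4 * K * N) * (seqProb κ τ * Z (List.ofFn τ) ^ 2)) := by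
        refine sum_le_sum fun τ _ => ?_
        have := mul_le_mul_of_nonneg_left (hamgm (overflow w (List.ofFn τ)) (Z (List.ofFn τ)))
          (seqProb_nonneg hκ τ)
        rw [overflow_sq] at this
        linarith
    _ ≤ K * N * (1 / (4 * K)) + 1 / (4 * K * N) * (K * N ^ 2) := by
        rw [sum_add_distrib, ← mul_sum, ← mul_sum]
        gcongr
    _ = N / 2 := by
        field_simp
        norm_num

/-- `κ` is the reference law of an observation given the past, `Λ μ` the likelihood ratio of
model `μ`, and `w` pays for the information in an observation. If the expected total weight is
small under the reference law, then it is also small with probability `1/2` under some model. -/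
lemma exists_half_le_sum_seqProb_mul_prod [Nonempty M] (hκ : ∀ l x, 0 ≤ κ l x)
    (hκ1 : ∀ l, ∑ x, κ l x = 1) (hC : 0 ≤ C) (hw0 : ∀ x, 0 ≤ w x) (hw : ∀ x, w x ≤ C)
    (hΛ : ∀ μ x, 0 ≤ Λ μ x) (hΛ1 : ∀ μ l, ∑ x, κ l x * Λ μ x = 1) (hB0 : ∀ μ ν, 0 ≤ B μ ν)
    (hB : ∀ μ ν l, ∑ x, κ l x * (Λ μ x * Λ ν x * Real.exp (-(B μ ν * w x))) ≤ 1)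
    (hK : 0 < K)
    (hexp : ∑ μ, ∑ ν, Real.exp ((1 + C) * B μ ν) ≤ K * (Fintype.card M : ℝ) ^ 2)
    (hweight : ∑ τ : Fin n → X, seqProb κ τ * ∑ t, w (τ t) ≤ 1 / (4 * K)) :
    ∃ μ, 1 / 2 ≤ ∑ τ : Fin n → X,
      seqProb κ τ * if ∑ t, w (τ t) ≤ 1 then ∏ t, Λ μ (τ t) else 0 := by
  set good : M → ℝ := fun μ => ∑ τ : Fin n → X,
    seqProb κ τ * if ∑ t, w (τ t) ≤ 1 then ∏ t, Λ μ (τ t) else 0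
  set bad : M → ℝ := fun μ => ∑ τ : Fin n → X,
    seqProb κ τ * (overflow w (List.ofFn τ) * stopLik w (Λ μ) (List.ofFn τ)) with hbad
  have hsplit (μ : M) : 1 ≤ good μ + bad μ := by
    rw [← sum_seqProb_mul_stopLik (w := w) hκ1 (hΛ1 μ) n, ← sum_add_distrib]
    refine sum_le_sum fun τ _ => ?_
    rw [← mul_add]
    exact mul_le_mul_of_nonneg_left (stopLik_le_add (hΛ μ) τ) (seqProb_nonneg hκ τ)
  have hbad_sum : ∑ μ, bad μ ≤ Fintype.card M / 2 := by
    simp only [hbad]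
    rw [sum_comm]
    simp only [← mul_sum]
    exact sum_seqProb_mul_overflow_mul_le hκ hK (by exact_mod_cast Fintype.card_pos)
      (fun l => ∑ μ, stopLik w (Λ μ) l) ((sum_seqProb_mul_overflow_le hκ hw0 n).trans hweight)
      ((sum_seqProb_mul_sq_sum_stopLik_le hκ hκ1 hC hw hΛ hB0 hB).trans hexp)
  by_contra! hgood
  have hlt : ∑ _μ : M, (1 / 2 : ℝ) < ∑ μ, bad μ :=
    sum_lt_sum_of_nonempty univ_nonempty fun μ _ => by
      linarith [hsplit μ, hgood μ]
  rw [sum_const, card_univ, nsmul_eq_mul] at hlt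
  linarith

end Mixture

/-! ### Random sign patterns -/

section Signs

/-- The sign `±1` of a Boolean. -/
def boolSign (b : Bool) : ℝ := if b then 1 else -1

lemma boolSign_mul_self (b : Bool) : boolSign b * boolSign b = 1 := by
  cases b <;> simp [boolSign]

variable {ι : Type*} [Fintype ι]

/-- The normalized correlation of two sign vectors. -/
def signCorr (μ ν : ι → Bool) : ℝ :=
  (∑ i, boolSign (μ i) * boolSign (ν i)) / Fintype.card ι

lemma abs_signCorr_le_one (μ ν : ι → Bool) : |signCorr μ ν| ≤ 1 := by
  have hsign : ∀ b, |boolSign b| = 1 := fun b => by cases b <;> simp [boolSign]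
  rw [signCorr, abs_div, Nat.abs_cast]
  refine div_le_one_of_le₀ ((abs_sum_le_sum_abs _ _).trans_eq ?_) (Nat.cast_nonneg _)
  simp [abs_mul, hsign]

lemma sum_exp_mul_sum_boolSign_le [DecidableEq ι] (t : ℝ) (ν : ι → Bool) :
    ∑ μ : ι → Bool, Real.exp (t * ∑ i, boolSign (μ i) * boolSign (ν i)) ≤
      2 ^ Fintype.card ι * Real.exp (Fintype.card ι * (t ^ 2 / 2)) := by
  have hcosh (i : ι) : ∑ b, Real.exp (t * (boolSign b * boolSign (ν i))) = 2 * Real.cosh t := by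
    rw [Fintype.sum_bool, Real.cosh_eq]
    cases ν i <;> simp [boolSign] <;> ring
  calc _ = ∑ μ : ι → Bool, ∏ i, Real.exp (t * (boolSign (μ i) * boolSign (ν i))) := by
        simp only [mul_sum, Real.exp_sum]
    _ = ∏ i, ∑ b, Real.exp (t * (boolSign b * boolSign (ν i))) :=
        (Fintype.prod_sum fun i b => Real.exp (t * (boolSign b * boolSign (ν i)))).symm
    _ = 2 ^ Fintype.card ι * Real.cosh t ^ Fintype.card ι := by
        simp only [hcosh, prod_const, card_univ, mul_pow]
    _ ≤ _ := by
        rw [Real.exp_nat_mul]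
        gcongr
        exact Real.cosh_le_exp_half_sq t

lemma exp_one_mul_exp_half_le : Real.exp 1 * (2 * Real.exp (1 / 2)) ≤ 16 := by
  have hone : Real.exp 1 ≤ 2.7182818286 := Real.exp_one_lt_d9.le
  have hhalf : Real.exp (1 / 2) ≤ 2 := by
    have : Real.exp (1 / 2) ^ 2 = Real.exp 1 := by
      rw [← Real.exp_nat_mul]
      norm_num
    nlinarith [Real.exp_pos (1 / 2)]
  nlinarith [Real.exp_pos (1 / 2)]

variable [DecidableEq ι] [Nonempty ι]

/-- A random correlation is of order `1 / √(card ι)`, in exponential moment. -/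
lemma sum_exp_sqrt_card_mul_abs_signCorr_le (ν : ι → Bool) :
    ∑ μ : ι → Bool, Real.exp (√(Fintype.card ι) * |signCorr μ ν|) ≤
      2 ^ Fintype.card ι * (2 * Real.exp (1 / 2)) := by
  have hm : (0 : ℝ) < Fintype.card ι := by exact_mod_cast Fintype.card_pos
  set r := √(Fintype.card ι : ℝ)
  have hr : 0 < r := Real.sqrt_pos.mpr hm
  have hr2 : (Fintype.card ι : ℝ) = r ^ 2 := (Real.sq_sqrt hm.le).symm
  have hscale (μ : ι → Bool) :
      r * |signCorr μ ν| = |1 / r * ∑ i, boolSign (μ i) * boolSign (ν i)| := by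
    rw [← abs_of_pos hr, ← abs_mul, abs_of_pos hr, signCorr, hr2]
    congr 1
    field_simp
  have hexponent : (Fintype.card ι : ℝ) * ((1 / r) ^ 2 / 2) = 1 / 2 := by
    rw [hr2]
    field_simp
  have hpos := sum_exp_mul_sum_boolSign_le (1 / r) ν
  have hneg := sum_exp_mul_sum_boolSign_le (-(1 / r)) ν
  rw [neg_sq] at hneg
  rw [hexponent] at hpos hneg
  calc _ ≤ ∑ μ : ι → Bool, (Real.exp (1 / r * ∑ i, boolSign (μ i) * boolSign (ν i)) +
        Real.exp (-(1 / r) * ∑ i, boolSign (μ i) * boolSign (ν i))) := by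
        refine sum_le_sum fun μ _ => ?_
        rw [hscale, neg_mul]
        exact Real.exp_abs_le _
    _ ≤ _ := by
        rw [sum_add_distrib]
        linarith

lemma sum_sum_exp_signCorr_le :
    ∑ μ : ι → Bool, ∑ ν : ι → Bool,
        Real.exp (√(Fintype.card ι) * |signCorr μ ν| + 1) ≤
      16 * (Fintype.card (ι → Bool) : ℝ) ^ 2 := by
  have hcard : (Fintype.card (ι → Bool) : ℝ) = 2 ^ Fintype.card ι := by simp
  calc _ = ∑ ν : ι → Bool,
        (∑ μ : ι → Bool, Real.exp (√(Fintype.card ι) * |signCorr μ ν|)) * Real.exp 1 := by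
        simp only [sum_mul, ← Real.exp_add]
        exact sum_comm
    _ ≤ ∑ _ν : ι → Bool, 2 ^ Fintype.card ι * (2 * Real.exp (1 / 2)) * Real.exp 1 := by
        gcongr with ν
        exact sum_exp_sqrt_card_mul_abs_signCorr_le ν
    _ = (Real.exp 1 * (2 * Real.exp (1 / 2))) * (Fintype.card (ι → Bool) : ℝ) ^ 2 := by
        rw [sum_const, card_univ, nsmul_eq_mul, ← hcard]
        ring
    _ ≤ _ := by
        gcongr
        exact exp_one_mul_exp_half_le

end Signs

/-! ### Finite POMDPs -/

section StarNorm

variable {S ι κ : Type} [Fintype S] [Fintype ι] [Fintype κ] [Unique κ]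

lemma starNorm_of_unique (x : ι × κ → ℝ) : starNorm x = ∑ p, |x p| := by
  rw [starNorm, Fintype.sum_unique, Real.sqrt_sq (sum_nonneg fun _ _ => abs_nonneg _),
    Fintype.sum_prod_type]
  simp only [Fintype.sum_unique]

lemma opNormStarOne_le_of_unique {B : Matrix S (ι × κ) ℝ} {R : ℝ} (hR : 0 ≤ R)
    (hB : ∀ p, ∑ s, |B s p| ≤ R) : opNormStarOne B ≤ R := by
  refine Real.sSup_le ?_ hR
  rintro _ ⟨x, hx, rfl⟩
  rw [starNorm_of_unique] at hx
  calc ∑ s, |B.mulVec x s|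
      ≤ ∑ s, ∑ p, |B s p| * |x p| := sum_le_sum fun s _ =>
        (abs_sum_le_sum_abs _ _).trans_eq (sum_congr rfl fun p _ => abs_mul _ _)
    _ = ∑ p, (∑ s, |B s p|) * |x p| := by
        rw [sum_comm]
        exact sum_congr rfl fun p _ => (sum_mul ..).symm
    _ ≤ ∑ p, R * |x p| :=
        sum_le_sum fun p _ => mul_le_mul_of_nonneg_right (hB p) (abs_nonneg _)
    _ ≤ R := by
        rw [← mul_sum]
        exact mul_le_of_le_one_right hR hx

end StarNorm

namespace POMDP

section Revealing

variable {S O A : Type} [Fintype S] [Fintype O] [Fintype A] {H : ℕ}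

/-- A single-step history carries no action, so it suffices to exhibit dual functionals of the
emission laws whose columns are small in `ℓ¹`. -/
lemma isRevealing_one_of_dual [DecidableEq S] (M : POMDP S O A H) {α : ℝ} (hα : 0 ≤ α)
    (b : ℕ → S → O → ℝ)
    (hdual : ∀ h s s', ∑ o, b h s o * M.emit h s' o = if s = s' then 1 else 0)
    (hcol : ∀ h o, ∑ s, |b h s o| ≤ 1 / α) : M.IsRevealing 1 α := by
  intro h _
  have : Unique (Fin (1 - 1) → A) := inferInstanceAs (Unique (Fin 0 → A))
  refine ⟨Matrix.of fun s (p : (Fin 1 → O) × (Fin (1 - 1) → A)) => b h s (p.1 0), fun v _ => ?_,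
    opNormStarOne_le_of_unique (by positivity) fun p => hcol h (p.1 0)⟩
  suffices hone : Matrix.of (fun s (p : (Fin 1 → O) × (Fin (1 - 1) → A)) => b h s (p.1 0)) *
      M.emitActMatrix h 1 = 1 by
    rw [hone, Matrix.one_mulVec]
  ext s s'
  rw [Matrix.one_apply, ← hdual h s s']
  exact Fintype.sum_equiv ((Equiv.prodUnique ..).trans (Equiv.funUnique (Fin 1) O)) _ _
    fun p => rfl

end Revealing

section TrajectoryLaw

variable {S O A : Type} [Fintype S] [Fintype O] [Fintype A] {H : ℕ}

lemma trajProb_nonneg (M : POMDP S O A H) (π : Policy O A) (τ : Fin H → O × A) :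
    0 ≤ M.trajProb π τ := by
  refine sum_nonneg fun s _ => prod_nonneg fun h _ => ?_
  refine mul_nonneg (mul_nonneg ?_ (M.emit_nonneg _ _ _)) (π.act_nonneg _ _ _)
  split_ifs
  · exact M.init_nonneg _
  · exact M.trans_nonneg _ _ _ _

/-- The kernel generating latent states, observations and actions jointly. -/
def jointKernel (M : POMDP S O A H) (π : Policy O A) (l : List (S × O × A)) (x : S × O × A) : ℝ :=
  (match l.getLast? with
    | none => M.init x.1
    | some y => M.trans l.length y.1 y.2.2 x.1) *
    M.emit (l.length + 1) x.1 x.2.1 * π.act (l.map Prod.snd) x.2.1 x.2.2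

lemma sum_jointKernel (M : POMDP S O A H) (π : Policy O A) (l : List (S × O × A)) :
    ∑ x, M.jointKernel π l x = 1 := by
  simp only [Fintype.sum_prod_type, jointKernel, ← mul_sum, π.act_sum, mul_one,
    M.emit_sum]
  cases l.getLast? with
  | none => exact M.init_sum
  | some y => exact M.trans_sum _ _ _

lemma trajProb_eq_sum_seqProb_jointKernel (M : POMDP S O A H) (π : Policy O A)
    (τ : Fin H → O × A) :
    M.trajProb π τ = ∑ s : Fin H → S, seqProb (M.jointKernel π) fun h => (s h, τ h) := by
  refine sum_congr rfl fun s _ => prod_congr rfl fun ⟨h, hh⟩ _ => ?_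
  have hlast : ((List.ofFn fun h => (s h, τ h)).take h).getLast? =
      if h = 0 then none else some (s ⟨h - 1, by omega⟩, τ ⟨h - 1, by omega⟩) := by
    cases h with
    | zero => rfl
    | succ h => simp [List.getLast?_take, show h < H by omega]
  have hsnd : ((List.ofFn fun h => (s h, τ h)).take h).map Prod.snd = (List.ofFn τ).take h := by
    rw [List.map_take, List.map_ofFn]
    rfl
  simp only [jointKernel, hlast, hsnd, List.length_take, List.length_ofFn, min_eq_left hh.le]
  split_ifs <;> rfl

lemma sum_trajProb (M : POMDP S O A H) (π : Policy O A) : ∑ τ, M.trajProb π τ = 1 := by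
  simp only [trajProb_eq_sum_seqProb_jointKernel]
  rw [sum_comm, ← Fintype.sum_prod_type',
    ← sum_seqProb (M.sum_jointKernel π) H]
  exact Fintype.sum_equiv (Equiv.arrowProdEquivProdArrow (Fin H) (fun _ => S) fun _ => O × A).symm
    _ _ fun _ => rfl

lemma value_le_one (M : POMDP S O A H) (π : Policy O A) : M.value π ≤ 1 := by
  rw [← M.sum_trajProb π]
  exact sum_le_sum fun τ _ =>
    mul_le_of_le_one_right (M.trajProb_nonneg π τ) (M.reward_total τ)

lemma value_le_optValue (M : POMDP S O A H) (π : Policy O A) : M.value π ≤ M.optValue :=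
  le_ciSup ⟨1, Set.forall_mem_range.2 M.value_le_one⟩ π

lemma transcriptProb_eq_seqProb (M : POMDP S O A H) (𝔄 : Algorithm O A H) {T : ℕ}
    (τs : Fin T → Fin H → O × A) :
    M.transcriptProb 𝔄 τs = seqProb (fun past τ => M.trajProb (𝔄.policyAt past) τ) τs := rfl

lemma sum_transcriptProb_mul_sum_le_expRegret (M : POMDP S O A H) (𝔄 : Algorithm O A H)
    (g : (Fin H → O × A) → ℝ)
    (hg : ∀ π, ∑ τ, M.trajProb π τ * g τ ≤ M.optValue - M.value π) (T : ℕ) :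
    ∑ τs : Fin T → Fin H → O × A, M.transcriptProb 𝔄 τs * ∑ t, g (τs t) ≤
      M.expRegret 𝔄 T := by
  simp only [expRegret, transcriptProb_eq_seqProb]
  rw [sum_seqProb_mul_sum_eq_sum_condExp (fun past => M.sum_trajProb _) (fun _ => g)]
  exact sum_le_sum fun τs _ => mul_le_mul_of_nonneg_left
    (sum_le_sum fun t _ => hg _)
    (seqProb_nonneg (fun _ _ => M.trajProb_nonneg _ _) τs)

end TrajectoryLaw

end POMDP

section DeterministicRuns

variable {S O A : Type}

/-- The latent state after the history `l` when the dynamics are given by the deterministic maps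
`g i` (`i` being the number of steps already taken) and start in `s₀`. -/
def latentRun (g : ℕ → S → A → S) (s₀ : S) (l : List (O × A)) : S :=
  histFold (fun s l x => g l.length s x.2) s₀ l

/-- The state which the dynamics `g`, started in `s₀`, assign to time `h`, given the states `s` and
the actions in `τ` at the preceding time. -/
def successor (g : ℕ → S → A → S) (s₀ : S) {n : ℕ} (τ : Fin n → O × A) (s : Fin n → S)
    (h : Fin n) : S :=
  if h.1 = 0 then s₀
  else g (h.1 - 1) (s ⟨h.1 - 1, Nat.lt_of_le_of_lt (Nat.sub_le _ _) h.2⟩)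
    (τ ⟨h.1 - 1, Nat.lt_of_le_of_lt (Nat.sub_le _ _) h.2⟩).2

@[simp] lemma latentRun_nil (g : ℕ → S → A → S) (s₀ : S) :
    latentRun g s₀ ([] : List (O × A)) = s₀ := histFold_nil ..

@[simp] lemma latentRun_append_singleton (g : ℕ → S → A → S) (s₀ : S) (l : List (O × A))
    (x : O × A) : latentRun g s₀ (l ++ [x]) = g l.length (latentRun g s₀ l) x.2 :=
  histFold_append_singleton ..

lemma latentRun_take_succ (g : ℕ → S → A → S) (s₀ : S) {n : ℕ} (τ : Fin n → O × A) {k : ℕ}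
    (hk : k < n) :
    latentRun g s₀ ((List.ofFn τ).take (k + 1)) =
      g k (latentRun g s₀ ((List.ofFn τ).take k)) (τ ⟨k, hk⟩).2 := by
  have htake : (List.ofFn τ).take (k + 1) = (List.ofFn τ).take k ++ [τ ⟨k, hk⟩] := by
    rw [List.take_add_one]
    simp [hk]
  rw [htake, latentRun_append_singleton, List.length_take, List.length_ofFn, min_eq_left hk.le]

lemma forall_eq_successor_iff (g : ℕ → S → A → S) (s₀ : S) {n : ℕ} (τ : Fin n → O × A)
    (s : Fin n → S) :
    (∀ h, s h = successor g s₀ τ s h) ↔ s = fun h => latentRun g s₀ ((List.ofFn τ).take h.1) := by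
  constructor
  · intro hs
    have hrun : ∀ k (hk : k < n), s ⟨k, hk⟩ = latentRun g s₀ ((List.ofFn τ).take k) := by
      intro k
      induction k with
      | zero => intro hk; simpa [successor] using hs ⟨0, hk⟩
      | succ k ih =>
        intro hk
        rw [latentRun_take_succ g s₀ τ (by omega), ← ih (by omega)]
        simpa [successor] using hs ⟨k + 1, hk⟩
    exact funext fun h => hrun h.1 h.2
  · rintro rfl ⟨h, hh⟩
    cases h with
    | zero => simp [successor]
    | succ h => simpa [successor] using latentRun_take_succ g s₀ τ (by omega)

lemma sum_prod_ite_eq_successor [Fintype S] [DecidableEq S] (g : ℕ → S → A → S) (s₀ : S) {n : ℕ}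
    (w : Fin n → S → ℝ) (τ : Fin n → O × A) :
    ∑ s : Fin n → S, ∏ h, (if s h = successor g s₀ τ s h then 1 else 0) * w h (s h) =
      ∏ h, w h (latentRun g s₀ ((List.ofFn τ).take h.1)) := by
  simp only [ite_mul, one_mul, zero_mul, prod_ite_zero, mem_univ, forall_const,
    forall_eq_successor_iff, sum_ite_eq', if_true]

lemma prod_eq_affine_of_affine_factor {ι : Type*} [Fintype ι] {F U V : ι → ℝ} {k : ι} {ε : ℝ}
    (hU : ∀ h, h ≠ k → F h = U h) (hV : ∀ h, h ≠ k → F h = V h)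
    (hk : F k = (1 - ε) * U k + ε * V k) :
    ∏ h, F h = (1 - ε) * ∏ h, U h + ε * ∏ h, V h := by
  classical
  have hFU : ∏ h ∈ univ.erase k, F h = ∏ h ∈ univ.erase k, U h :=
    prod_congr rfl fun h hh => hU h (ne_of_mem_erase hh)
  have hFV : ∏ h ∈ univ.erase k, F h = ∏ h ∈ univ.erase k, V h :=
    prod_congr rfl fun h hh => hV h (ne_of_mem_erase hh)
  rw [← mul_prod_erase univ F (mem_univ k), ← mul_prod_erase univ U (mem_univ k),
    ← mul_prod_erase univ V (mem_univ k), ← hFU, ← hFV, hk]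
  ring

end DeterministicRuns

namespace POMDP

variable {S O A : Type} [Fintype S] [Fintype O] [Fintype A] {H : ℕ}

/-- The probability of `τ` under the policy `π` when the latent states follow the deterministic
dynamics `g` instead of the transition kernels of `M`. -/
def runProb (M : POMDP S O A H) (g : ℕ → S → A → S) (s₀ : S) (π : Policy O A)
    (τ : Fin H → O × A) : ℝ :=
  ∏ h : Fin H, M.emit (h.1 + 1) (latentRun g s₀ ((List.ofFn τ).take h.1)) (τ h).1 *
    π.act ((List.ofFn τ).take h.1) (τ h).1 (τ h).2

/-- If all transitions are deterministic except that a single biased coin, tossed at step `k`,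
decides between two maps, then the trajectory law is the mixture of two deterministic runs. -/
lemma trajProb_eq_of_single_coin [DecidableEq S] {M : POMDP S O A H} {g₀ g₁ : ℕ → S → A → S}
    {s₀ : S} {ε : ℝ} {k : ℕ} (hk : k + 1 < H) (hg : ∀ i, i ≠ k → g₀ i = g₁ i)
    (hinit : ∀ s, M.init s = if s = s₀ then 1 else 0)
    (htrans : ∀ i s a s', M.trans (i + 1) s a s' =
      (1 - ε) * (if s' = g₀ i s a then 1 else 0) + ε * (if s' = g₁ i s a then 1 else 0))
    (π : Policy O A) (τ : Fin H → O × A) :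
    M.trajProb π τ = (1 - ε) * M.runProb g₀ s₀ π τ + ε * M.runProb g₁ s₀ π τ := by
  let w (h : Fin H) (s : S) : ℝ :=
    M.emit (h.1 + 1) s (τ h).1 * π.act ((List.ofFn τ).take h.1) (τ h).1 (τ h).2
  have hrun : ∀ g, M.runProb g s₀ π τ =
      ∑ s : Fin H → S, ∏ h, (if s h = successor g s₀ τ s h then 1 else 0) * w h (s h) :=
    fun g => (sum_prod_ite_eq_successor g s₀ w τ).symm
  rw [hrun, hrun, mul_sum, mul_sum, ← sum_add_distrib]
  refine sum_congr rfl fun s _ =>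
    prod_eq_affine_of_affine_factor (k := ⟨k + 1, hk⟩) ?_ ?_ ?_
  all_goals try rintro ⟨_ | h, hh⟩ hne
  all_goals simp only [w, successor, hinit, htrans, Nat.add_sub_cancel, Nat.add_eq_zero_iff,
    one_ne_zero, and_false, if_false, if_true]
  · ring
  · rw [hg h fun e => hne (Fin.ext (by simp [e]))]
    ring
  · ring
  · rw [hg h fun e => hne (Fin.ext (by simp [e]))]
    ring
  · ring

end POMDP

/-! ### Relabelling states and observations -/

section Relabelling

variable {O O' A : Type}

/-- Relabelling of the observation of a step. -/
def relabelStep (e : O ≃ O') : O × A ≃ O' × A := e.prodCongr (Equiv.refl A)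

@[simp] lemma relabelStep_symm_relabelStep (e : O ≃ O') (x : O × A) :
    relabelStep e.symm (relabelStep e x) = x := (relabelStep e).symm_apply_apply x

@[simp] lemma relabelStep_relabelStep_symm (e : O ≃ O') (x : O' × A) :
    relabelStep e (relabelStep e.symm x) = x := (relabelStep e).apply_symm_apply x

variable [Fintype A] {H : ℕ}

/-- The policy which acts on relabelled observations as `π` does on the original ones. -/
def Policy.relabel (e : O ≃ O') (π : Policy O A) : Policy O' A where
  act l o a := π.act (l.map (relabelStep e.symm)) (e.symm o) a
  act_nonneg _ _ _ := π.act_nonneg _ _ _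
  act_sum _ _ := π.act_sum _ _

/-- The algorithm which acts on relabelled observations as `𝔄` does on the original ones. -/
def Algorithm.relabel (e : O ≃ O') (𝔄 : Algorithm O A H) : Algorithm O' A H where
  act past l o a :=
    𝔄.act (past.map fun τ h => relabelStep e.symm (τ h)) (l.map (relabelStep e.symm))
      (e.symm o) a
  act_nonneg _ _ _ _ := 𝔄.act_nonneg _ _ _ _
  act_sum _ _ _ := 𝔄.act_sum _ _ _
  out past := (𝔄.out (past.map fun τ h => relabelStep e.symm (τ h))).relabel e

lemma Policy.relabel_surjective (e : O ≃ O') :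
    Function.Surjective (Policy.relabel (A := A) e) := by
  intro π
  refine ⟨π.relabel e.symm, ?_⟩
  cases π
  simp [Policy.relabel, Function.comp_def]

lemma Algorithm.relabel_surjective (e : O ≃ O') :
    Function.Surjective (Algorithm.relabel (A := A) (H := H) e) := by
  intro 𝔄
  refine ⟨𝔄.relabel e.symm, ?_⟩
  cases 𝔄
  simp [Algorithm.relabel, Policy.relabel, Function.comp_def]

end Relabelling

namespace POMDP

variable {S S' O O' A : Type} [Fintype S] [Fintype S'] [Fintype O] [Fintype O'] [Fintype A] {H : ℕ}

/-- The POMDP `M` with states and observations renamed along `eS` and `eO`. -/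
def relabel (M : POMDP S O A H) (eS : S ≃ S') (eO : O ≃ O') : POMDP S' O' A H where
  init s := M.init (eS.symm s)
  init_nonneg _ := M.init_nonneg _
  init_sum := by rw [eS.symm.sum_comp M.init, M.init_sum]
  trans h s a s' := M.trans h (eS.symm s) a (eS.symm s')
  trans_nonneg _ _ _ _ := M.trans_nonneg _ _ _ _
  trans_sum h s a := by rw [eS.symm.sum_comp (M.trans h _ a), M.trans_sum]
  emit h s o := M.emit h (eS.symm s) (eO.symm o)
  emit_nonneg _ _ _ := M.emit_nonneg _ _ _
  emit_sum h s := by rw [eO.symm.sum_comp (M.emit h _), M.emit_sum]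
  reward h o a := M.reward h (eO.symm o) a
  reward_nonneg _ _ _ := M.reward_nonneg _ _ _
  reward_le_one _ _ _ := M.reward_le_one _ _ _
  reward_total τ := M.reward_total fun h => relabelStep eO.symm (τ h)

variable (M : POMDP S O A H) (eS : S ≃ S') (eO : O ≃ O')

lemma trajProb_relabel (π : Policy O A) (τ : Fin H → O × A) :
    (M.relabel eS eO).trajProb (π.relabel eO) (fun h => relabelStep eO (τ h)) =
      M.trajProb π τ := by
  have hhist : ∀ h, ((List.ofFn fun h => relabelStep eO (τ h)).take h).map
      (relabelStep eO.symm) = (List.ofFn τ).take h := by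
    intro h
    rw [List.map_take, List.map_ofFn]
    simp [Function.comp_def]
  refine Fintype.sum_equiv ((Equiv.refl (Fin H)).arrowCongr eS.symm) _ _ fun s => ?_
  refine prod_congr rfl fun h _ => ?_
  simp only [relabel, Policy.relabel, hhist]
  simp [relabelStep]

lemma value_relabel (π : Policy O A) : (M.relabel eS eO).value (π.relabel eO) = M.value π := by
  refine (Fintype.sum_equiv ((Equiv.refl (Fin H)).arrowCongr (relabelStep eO)) _ _
    fun τ => ?_).symm
  refine congrArg₂ _ (M.trajProb_relabel eS eO π τ).symm ?_
  simp [relabel, relabelStep]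

lemma optValue_relabel : (M.relabel eS eO).optValue = M.optValue :=
  ((Policy.relabel_surjective eO).iSup_congr _ fun π => M.value_relabel eS eO π).symm

lemma expRegret_relabel (𝔄 : Algorithm O A H) (T : ℕ) :
    (M.relabel eS eO).expRegret (𝔄.relabel eO) T = M.expRegret 𝔄 T := by
  let e : (Fin T → Fin H → O × A) ≃ (Fin T → Fin H → O' × A) :=
    (Equiv.refl _).arrowCongr ((Equiv.refl _).arrowCongr (relabelStep eO))
  have hpolicy : ∀ (τs : Fin T → Fin H → O × A) (t : ℕ),
      (𝔄.relabel eO).policyAt ((List.ofFn (e τs)).take t) =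
        (𝔄.policyAt ((List.ofFn τs).take t)).relabel eO := by
    intro τs t
    simp [Algorithm.policyAt, Algorithm.relabel, Policy.relabel, List.map_take, List.map_ofFn,
      Function.comp_def, e]
  refine (Fintype.sum_equiv e _ _ fun τs => ?_).symm
  simp only [transcriptProb, hpolicy, value_relabel, optValue_relabel]
  exact congrArg (· * _) (prod_congr rfl fun t _ => (M.trajProb_relabel eS eO _ _).symm)

end POMDP

/-! ### The hard instances -/

/-- Parameters of the hard instances with horizon `L + 1` (time indices `0, …, L`).
A leaf is selected at the indices `i < depth`; the lock may be entered by any action other than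
`wait` at the indices `depth ≤ i < depth + window`, and is entered automatically at index
`depth + window`.  There are `2 * pairs` lock symbols, `tiltSize` is the size of the tilt of their
law in the good lock state, and `entryProb` is the probability with which the correct entry leads
to that state. -/
structure LockConfig (A : Type) (L : ℕ) where
  leaves : ℕ
  pairs : ℕ
  depth : ℕ
  window : ℕ
  wait : A
  move : A
  tiltSize : ℝ
  entryProb : ℝ
  leaves_pos : 0 < leaves
  pairs_pos : 0 < pairs
  wait_ne_move : wait ≠ move
  tiltSize_pos : 0 < tiltSize
  tiltSize_le : (L + 1) * tiltSize ≤ 3 / 5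
  entryProb_nonneg : 0 ≤ entryProb
  entryProb_le : entryProb ≤ 1 / 8
  leaves_le : leaves ≤ 2 ^ depth
  depth_add_window_lt : depth + window < L

namespace LockConfig

variable {A : Type} {L : ℕ} (c : LockConfig A L)

/-- The latent states: the leaves `inl x`, the good lock state `inr true` and the bad lock state
`inr false`. -/
abbrev State : Type := Fin c.leaves ⊕ Bool

/-- The observations: one symbol for each leaf, and the lock symbols `inr (k, b)`. -/
abbrev Obs : Type := Fin c.leaves ⊕ (Fin c.pairs × Bool)

/-- The state in which every episode starts. -/
def root : c.State := Sum.inl ⟨0, c.leaves_pos⟩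

/-- A secret: the rewarding leaf, the rewarding entry index relative to `depth`, and a password
whose letter at the entry index is not the waiting action. -/
def Secret : Type :=
  {p : Fin c.leaves × Fin c.window × (Fin L → A) //
    p.2.2 ⟨c.depth + p.2.1, by have := c.depth_add_window_lt; omega⟩ ≠ c.wait}

namespace Secret

variable {c} (θ : c.Secret)

/-- The rewarding leaf. -/
def leaf : Fin c.leaves := θ.1.1

/-- The rewarding entry index, in absolute time. -/
def entry : ℕ := c.depth + θ.1.2.1

/-- The password letter at index `i`, extended by the waiting action beyond its range. -/
def letter (i : ℕ) : A := if h : i < L then θ.1.2.2 ⟨i, h⟩ else c.wait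

lemma depth_le_entry : c.depth ≤ θ.entry := Nat.le_add_right ..

lemma entry_lt : θ.entry < c.depth + c.window := Nat.add_lt_add_left θ.1.2.1.2 _

lemma entry_lt_horizon : θ.entry < L := θ.entry_lt.trans c.depth_add_window_lt

lemma letter_entry_ne : θ.letter θ.entry ≠ c.wait := by
  rw [letter, dif_pos θ.entry_lt_horizon]
  exact θ.2

lemma ext_leaf_entry_letters {θ θ' : c.Secret} (hleaf : θ.leaf = θ'.leaf)
    (hentry : θ.entry = θ'.entry) (hletters : θ.1.2.2 = θ'.1.2.2) : θ = θ' :=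
  Subtype.ext (Prod.ext hleaf (Prod.ext (Fin.ext (Nat.add_left_cancel hentry)) hletters))

end Secret

section Emissions

/-- The untilted emission law: leaves are observed, and the lock states emit uniform lock
symbols. -/
def baseEmit : c.State → c.Obs → ℝ
  | Sum.inl x, Sum.inl y => if x = y then 1 else 0
  | Sum.inl _, Sum.inr _ => 0
  | Sum.inr _, Sum.inl _ => 0
  | Sum.inr _, Sum.inr _ => 1 / (2 * c.pairs)

/-- The function `±1` on the lock symbols whose sign is flipped along the pattern `μ`. -/
def lockSign (μ : Fin c.pairs → Bool) : c.Obs → ℝ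
  | Sum.inl _ => 0
  | Sum.inr (k, b) => boolSign (μ k) * boolSign b

/-- The sign pattern of the tilt at index `i`; the last tilt is the same in all instances. -/
def pattern (μ : Fin c.pairs → Bool) (i : ℕ) : Fin c.pairs → Bool :=
  if i = L then fun _ => true else μ

/-- The size of the tilt at index `i`; the last tilt is large, so that the good lock state pays. -/
def tiltScale (i : ℕ) : ℝ := if i = L then 1 / 2 else c.tiltSize

/-- The relative tilt of the emission law of the good lock state at index `i`. -/
def tilt (μ : Fin c.pairs → Bool) (i : ℕ) (o : c.Obs) : ℝ :=
  c.tiltScale i * c.lockSign (c.pattern μ i) o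

/-- The emission law, tilted in the good lock state. -/
def emission (μ : Fin c.pairs → Bool) (i : ℕ) (s : c.State) (o : c.Obs) : ℝ :=
  c.baseEmit s o * (1 + if s = Sum.inr true then c.tilt μ i o else 0)

/-- The observations rewarded at the last step: the lock symbols of positive sign. -/
def rewarded : c.Obs → Bool
  | Sum.inl _ => false
  | Sum.inr (_, b) => b

lemma pairs_pos' : (0 : ℝ) < c.pairs := Nat.cast_pos.2 c.pairs_pos

lemma baseEmit_nonneg (s : c.State) (o : c.Obs) : 0 ≤ c.baseEmit s o := by
  rcases s with x | b <;> rcases o with y | kb <;> simp only [baseEmit]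
  · split_ifs <;> norm_num
  · exact le_rfl
  · exact le_rfl
  · positivity

lemma tiltScale_pos (i : ℕ) : 0 < c.tiltScale i := by
  have := c.tiltSize_pos
  unfold tiltScale
  split_ifs <;> positivity

lemma tiltScale_of_ne {i : ℕ} (hi : i ≠ L) : c.tiltScale i = c.tiltSize := if_neg hi

lemma tiltScale_le (i : ℕ) : c.tiltScale i ≤ 3 / 5 := by
  have hsize := c.tiltSize_le
  have hpos : 0 ≤ L * c.tiltSize := mul_nonneg L.cast_nonneg c.tiltSize_pos.le
  unfold tiltScale
  split_ifs <;> linarith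

lemma abs_lockSign_le_one (μ : Fin c.pairs → Bool) (o : c.Obs) : |c.lockSign μ o| ≤ 1 := by
  rcases o with y | ⟨k, b⟩
  · simp [lockSign]
  · cases h : μ k <;> cases b <;> simp [lockSign, boolSign, h]

lemma abs_tilt_le (μ : Fin c.pairs → Bool) (i : ℕ) (o : c.Obs) :
    |c.tilt μ i o| ≤ c.tiltScale i := by
  rw [tilt, abs_mul, abs_of_pos (c.tiltScale_pos i)]
  exact mul_le_of_le_one_right (c.tiltScale_pos i).le (c.abs_lockSign_le_one _ o)

lemma sum_baseEmit_inr_mul (b : Bool) (F : c.Obs → ℝ) :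
    ∑ o, c.baseEmit (Sum.inr b) o * F o =
      1 / (2 * c.pairs) * ∑ k, (F (Sum.inr (k, true)) + F (Sum.inr (k, false))) := by
  simp only [Fintype.sum_sum_type, baseEmit, zero_mul, sum_const_zero, zero_add,
    Fintype.sum_prod_type, Fintype.sum_bool, mul_sum, mul_add]

lemma sum_baseEmit (s : c.State) : ∑ o, c.baseEmit s o = 1 := by
  have hpairs := c.pairs_pos'
  rcases s with x | b
  · simp [Fintype.sum_sum_type, baseEmit]
  · have h := c.sum_baseEmit_inr_mul b fun _ => 1
    simp only [mul_one, sum_const, card_univ, Fintype.card_fin, nsmul_eq_mul] at h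
    rw [h]
    field_simp
    norm_num

lemma sum_baseEmit_mul_lockSign (μ : Fin c.pairs → Bool) (s : c.State) :
    ∑ o, c.baseEmit s o * c.lockSign μ o = 0 := by
  rcases s with x | b
  · simp [Fintype.sum_sum_type, baseEmit, lockSign]
  · rw [sum_baseEmit_inr_mul]
    simp [lockSign, boolSign]

lemma sum_baseEmit_inr_mul_lockSign_mul_lockSign (μ ν : Fin c.pairs → Bool) (b : Bool) :
    ∑ o, c.baseEmit (Sum.inr b) o * (c.lockSign μ o * c.lockSign ν o) = signCorr μ ν := by
  have hpairs := c.pairs_pos'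
  have hpair : ∀ k, boolSign (μ k) * boolSign true * (boolSign (ν k) * boolSign true) +
      boolSign (μ k) * boolSign false * (boolSign (ν k) * boolSign false) =
        2 * (boolSign (μ k) * boolSign (ν k)) := by
    intro k
    simp only [boolSign, if_true, Bool.false_eq_true, if_false]
    ring
  simp only [sum_baseEmit_inr_mul, lockSign, hpair, ← mul_sum, signCorr, Fintype.card_fin]
  field_simp

lemma sum_baseEmit_inr_mul_rewarded (b : Bool) :
    ∑ o, c.baseEmit (Sum.inr b) o * (if c.rewarded o then 1 else 0) = 1 / 2 := by
  have hpairs := c.pairs_pos'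
  rw [sum_baseEmit_inr_mul]
  simp only [rewarded, if_true, Bool.false_eq_true, if_false, add_zero, sum_const,
    card_univ, Fintype.card_fin, nsmul_eq_mul]
  field_simp

lemma sum_baseEmit_inr_mul_tilt_mul_rewarded (μ : Fin c.pairs → Bool) (b : Bool) :
    ∑ o, c.baseEmit (Sum.inr b) o * (c.tilt μ L o * (if c.rewarded o then 1 else 0)) = 1 / 4 := by
  have hpairs := c.pairs_pos'
  rw [sum_baseEmit_inr_mul]
  simp only [rewarded, tilt, tiltScale, lockSign, pattern, boolSign, if_true, Bool.false_eq_true,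
    if_false, mul_one, mul_zero, add_zero, sum_const, card_univ, Fintype.card_fin,
    nsmul_eq_mul]
  field_simp
  norm_num

lemma sum_baseEmit_mul_tilt (μ : Fin c.pairs → Bool) (i : ℕ) (s : c.State) :
    ∑ o, c.baseEmit s o * c.tilt μ i o = 0 := by
  simp only [tilt, mul_left_comm _ (c.tiltScale i), ← mul_sum, sum_baseEmit_mul_lockSign,
    mul_zero]

lemma sum_baseEmit_inr_mul_tilt_mul_tilt (μ ν : Fin c.pairs → Bool) (i : ℕ) (b : Bool) :
    ∑ o, c.baseEmit (Sum.inr b) o * (c.tilt μ i o * c.tilt ν i o) =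
      c.tiltScale i ^ 2 * signCorr (c.pattern μ i) (c.pattern ν i) := by
  rw [← c.sum_baseEmit_inr_mul_lockSign_mul_lockSign _ _ b, mul_sum]
  refine sum_congr rfl fun o _ => ?_
  simp only [tilt]
  ring

lemma emission_nonneg (μ : Fin c.pairs → Bool) (i : ℕ) (s : c.State) (o : c.Obs) :
    0 ≤ c.emission μ i s o := by
  refine mul_nonneg (c.baseEmit_nonneg s o) ?_
  have htilt := neg_le_of_abs_le ((c.abs_tilt_le μ i o).trans (c.tiltScale_le i))
  split_ifs <;> linarith

lemma sum_emission_mul (μ : Fin c.pairs → Bool) (i : ℕ) (s : c.State) (F : c.Obs → ℝ) :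
    ∑ o, c.emission μ i s o * F o = ∑ o, c.baseEmit s o * F o +
      if s = Sum.inr true then ∑ o, c.baseEmit s o * (c.tilt μ i o * F o) else 0 := by
  split_ifs with hs
  · rw [← sum_add_distrib]
    refine sum_congr rfl fun o _ => ?_
    rw [emission, if_pos hs]
    ring
  · simp only [emission, if_neg hs, add_zero, mul_one]

lemma sum_emission (μ : Fin c.pairs → Bool) (i : ℕ) (s : c.State) :
    ∑ o, c.emission μ i s o = 1 := by
  have h := c.sum_emission_mul μ i s fun _ => 1
  simp only [mul_one, sum_baseEmit, sum_baseEmit_mul_tilt, ite_self, add_zero] at h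
  exact h

end Emissions

section Dual

/-- A functional which separates the good lock state from all other states. -/
def goodDual (μ : Fin c.pairs → Bool) (i : ℕ) (o : c.Obs) : ℝ :=
  c.lockSign (c.pattern μ i) o / c.tiltScale i

/-- The functionals dual to the emission laws at index `i`. -/
def dual (μ : Fin c.pairs → Bool) (i : ℕ) : c.State → c.Obs → ℝ
  | Sum.inl x => c.baseEmit (Sum.inl x)
  | Sum.inr true => c.goodDual μ i
  | Sum.inr false => fun o => (if o.isRight then 1 else 0) - c.goodDual μ i o

lemma abs_goodDual_le (μ : Fin c.pairs → Bool) (i : ℕ) (o : c.Obs) :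
    |c.goodDual μ i o| ≤ 1 / c.tiltScale i := by
  rw [goodDual, abs_div, abs_of_pos (c.tiltScale_pos i)]
  exact div_le_div_of_nonneg_right (c.abs_lockSign_le_one _ o) (c.tiltScale_pos i).le

lemma sum_emission_mul_goodDual (μ : Fin c.pairs → Bool) (i : ℕ) (s : c.State) :
    ∑ o, c.emission μ i s o * c.goodDual μ i o = if s = Sum.inr true then 1 else 0 := by
  have hscale := (c.tiltScale_pos i).ne'
  have hmean : ∑ o, c.baseEmit s o * c.goodDual μ i o = 0 := by
    simp only [goodDual, ← mul_div_assoc, ← sum_div, sum_baseEmit_mul_lockSign, zero_div]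
  have hpair : ∀ o, c.tilt μ i o * c.goodDual μ i o =
      c.lockSign (c.pattern μ i) o * c.lockSign (c.pattern μ i) o := by
    intro o
    simp only [tilt, goodDual]
    field_simp
  rw [sum_emission_mul, hmean, zero_add]
  split_ifs with hs
  · rw [hs]
    simp only [hpair, sum_baseEmit_inr_mul_lockSign_mul_lockSign, signCorr, boolSign_mul_self]
    simp [c.pairs_pos.ne']
  · rfl

lemma sum_emission_mul_isRight (μ : Fin c.pairs → Bool) (i : ℕ) (s : c.State) :
    ∑ o, c.emission μ i s o * (if o.isRight then 1 else 0) = if s.isRight then 1 else 0 := by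
  rcases s with x | b
  · simp [Fintype.sum_sum_type, emission, baseEmit]
  · rw [Sum.isRight_inr, if_pos rfl]
    refine (sum_congr rfl fun o _ => ?_).trans (c.sum_emission μ i (Sum.inr b))
    rcases o with y | kb
    · rw [emission, baseEmit, zero_mul, zero_mul]
    · rw [Sum.isRight_inr, if_pos rfl, mul_one]

lemma sum_dual_mul_emission (μ : Fin c.pairs → Bool) (i : ℕ) (s s' : c.State) :
    ∑ o, c.dual μ i s o * c.emission μ i s' o = if s = s' then 1 else 0 := by
  simp only [mul_comm (c.dual μ i s _)]
  rcases s with x | _ | _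
  · rcases s' with y | b <;> simp [Fintype.sum_sum_type, dual, emission, baseEmit, eq_comm]
  · simp only [dual, mul_sub, sum_sub_distrib, sum_emission_mul_goodDual,
      sum_emission_mul_isRight]
    rcases s' with y | _ | _ <;> simp
  · rw [dual, sum_emission_mul_goodDual, eq_comm]
    simp [eq_comm]

lemma sum_abs_dual_le {α : ℝ} (hα : 0 < α) (hα' : α ≤ 1 / 6) (hsize : c.tiltSize = 3 * α)
    (μ : Fin c.pairs → Bool) (i : ℕ) (o : c.Obs) : ∑ s, |c.dual μ i s o| ≤ 1 / α := by
  have hα_inv : 1 / α = 3 * (1 / (3 * α)) := by field_simp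
  have hthree : 2 ≤ 1 / (3 * α) := by
    rw [le_div_iff₀ (by positivity)]
    linarith
  have hgood : |c.goodDual μ i o| ≤ 1 / (3 * α) := by
    refine (c.abs_goodDual_le μ i o).trans ?_
    unfold tiltScale
    split_ifs
    · linarith
    · rw [hsize]
  rw [Fintype.sum_sum_type, Fintype.sum_bool]
  rcases o with y | kb
  · have habs : ∀ x : Fin c.leaves, |if x = y then (1 : ℝ) else 0| = if x = y then 1 else 0 := by
      intro x
      split_ifs <;> simp
    simp only [dual, goodDual, lockSign, baseEmit, habs, zero_div, Sum.isRight_inl,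
      Bool.false_eq_true, if_false, sub_zero, abs_zero, add_zero, sum_ite_eq',
      mem_univ, if_true]
    linarith
  · have hbad : |1 - c.goodDual μ i (Sum.inr kb)| ≤ 1 + |c.goodDual μ i (Sum.inr kb)| := by
      simpa using abs_sub (1 : ℝ) (c.goodDual μ i (Sum.inr kb))
    simp only [dual, baseEmit, Sum.isRight_inr, if_true, abs_zero, sum_const_zero]
    linarith

end Dual

section Dynamics

variable [DecidableEq A]

/-- Leaf selection: the action `move` at index `i` sets the `i`-th binary digit of the leaf, as far
as there is such a leaf. -/
def setDigit (i : ℕ) (x : Fin c.leaves) (a : A) : Fin c.leaves :=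
  if h : x.1 + 2 ^ i < c.leaves then (if a = c.move then ⟨x.1 + 2 ^ i, h⟩ else x) else x

/-- The motion out of a leaf when the lock is not opened. -/
def leafStep (i : ℕ) (x : Fin c.leaves) (a : A) : c.State :=
  if i < c.depth then Sum.inl (c.setDigit i x a)
  else if i < c.depth + c.window ∧ a = c.wait then Sum.inl x else Sum.inr false

/-- The reference dynamics, in which the good lock state is never reached. -/
def refStep (i : ℕ) : c.State → A → c.State
  | Sum.inl x, a => c.leafStep i x a
  | Sum.inr _, _ => Sum.inr false

variable {c}

/-- The dynamics with secret `θ` when the entry fails. -/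
def missStep (θ : c.Secret) (i : ℕ) : c.State → A → c.State
  | Sum.inl x, a => c.leafStep i x a
  | Sum.inr b, a => Sum.inr (b && decide (a = θ.letter i))

/-- The dynamics with secret `θ` when the entry succeeds. -/
def hitStep (θ : c.Secret) (i : ℕ) (s : c.State) (a : A) : c.State :=
  if i = θ.entry ∧ s = Sum.inl θ.leaf ∧ a = θ.letter i then Sum.inr true else missStep θ i s a

lemma missStep_of_ne {s : c.State} (hs : s ≠ Sum.inr true) (θ : c.Secret) (i : ℕ) (a : A) :
    missStep θ i s a = c.refStep i s a := by
  rcases s with x | _ | _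
  · rfl
  · rfl
  · exact absurd rfl hs

lemma missStep_eq_hitStep {θ : c.Secret} {i : ℕ} (hi : i ≠ θ.entry) :
    missStep θ i = hitStep θ i := by
  funext s a
  rw [hitStep, if_neg fun h => hi h.1]

variable (c) in
/-- The hard instance with secret `θ` and sign pattern `μ`.  Time is counted from `1` in a `POMDP`
and from `0` in the dynamics. -/
def model [Fintype A] (θ : c.Secret) (μ : Fin c.pairs → Bool) :
    POMDP c.State c.Obs A (L + 1) where
  init s := if s = c.root then 1 else 0
  init_nonneg s := by split_ifs <;> norm_num
  init_sum := by rw [sum_ite_eq', if_pos (mem_univ _)]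
  trans h s a s' := (1 - c.entryProb) * (if s' = missStep θ (h - 1) s a then 1 else 0) +
    c.entryProb * (if s' = hitStep θ (h - 1) s a then 1 else 0)
  trans_nonneg h s a s' := by
    have := c.entryProb_nonneg
    have := c.entryProb_le
    split_ifs <;> linarith
  trans_sum h s a := by
    rw [sum_add_distrib, ← mul_sum, ← mul_sum, sum_ite_eq',
      sum_ite_eq', if_pos (mem_univ _), if_pos (mem_univ _)]
    ring
  emit h s o := c.emission μ (h - 1) s o
  emit_nonneg h s o := c.emission_nonneg μ _ s o
  emit_sum h s := c.sum_emission μ _ s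
  reward h o _ := if h = L + 1 ∧ c.rewarded o then 1 else 0
  reward_nonneg h o _ := by split_ifs <;> norm_num
  reward_le_one h o _ := by split_ifs <;> norm_num
  reward_total τ := by
    rw [sum_eq_single (Fin.last L)]
    · split_ifs <;> norm_num
    · intro h _ hne
      exact if_neg fun hh => hne (Fin.ext (Nat.succ_injective hh.1))
    · exact fun h => absurd (mem_univ _) h

end Dynamics

lemma isRevealing_relabel_model [DecidableEq A] [Fintype A] {S' O' : Type} [Fintype S']
    [Fintype O'] {α : ℝ} (hα : 0 < α) (hα' : α ≤ 1 / 6) (hsize : c.tiltSize = 3 * α)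
    (eS : c.State ≃ S') (eO : c.Obs ≃ O') (θ : c.Secret) (μ : Fin c.pairs → Bool) :
    ((c.model θ μ).relabel eS eO).IsRevealing 1 α := by
  classical
  refine POMDP.isRevealing_one_of_dual _ hα.le
    (fun h s o => c.dual μ (h - 1) (eS.symm s) (eO.symm o)) (fun h s s' => ?_) fun h o => ?_
  · exact (eO.symm.sum_comp fun o =>
      c.dual μ (h - 1) (eS.symm s) o * c.emission μ (h - 1) (eS.symm s') o).trans
        ((c.sum_dual_mul_emission ..).trans (by simp only [eS.symm.injective.eq_iff]))
  · exact (eS.symm.sum_comp fun s => |c.dual μ (h - 1) s (eO.symm o)|).trans_le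
      (c.sum_abs_dual_le hα hα' hsize ..)

section ReferenceRun

variable [DecidableEq A]

/-- The state under the reference dynamics after the history `l`. -/
def refState (l : List (c.Obs × A)) : c.State := latentRun c.refStep c.root l

variable {c}

/-- After the history `l` the good lock state is occupied, provided that the entry succeeds. -/
def Live (θ : c.Secret) (l : List (c.Obs × A)) : Prop :=
  latentRun (hitStep θ) c.root l = Sum.inr true

instance (θ : c.Secret) (l : List (c.Obs × A)) : Decidable (Live θ l) :=
  inferInstanceAs (Decidable (_ = _))

/-- The indicator of `Live`. -/
def live (θ : c.Secret) (l : List (c.Obs × A)) : ℝ := if Live θ l then 1 else 0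

variable (c) in
@[simp] lemma refState_nil : c.refState [] = c.root := latentRun_nil ..

variable (c) in
lemma refState_append_singleton (l : List (c.Obs × A)) (x : c.Obs × A) :
    c.refState (l ++ [x]) = c.refStep l.length (c.refState l) x.2 :=
  latentRun_append_singleton ..

lemma refStep_ne (i : ℕ) (s : c.State) (a : A) : c.refStep i s a ≠ Sum.inr true := by
  rcases s with x | _
  · simp only [refStep, leafStep]
    split_ifs <;> simp
  · simp [refStep]

lemma refState_ne (l : List (c.Obs × A)) : c.refState l ≠ Sum.inr true := by
  induction l using List.reverseRecOn with
  | nil => simp [root]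
  | append_singleton l x => exact c.refState_append_singleton l x ▸ refStep_ne _ _ _

lemma latentRun_missStep (θ : c.Secret) (l : List (c.Obs × A)) :
    latentRun (missStep θ) c.root l = c.refState l := by
  induction l using List.reverseRecOn with
  | nil => simp
  | append_singleton l x ih =>
    rw [latentRun_append_singleton, ih, refState_append_singleton, missStep_of_ne (refState_ne l)]

lemma leafStep_entry {θ : c.Secret} (x : Fin c.leaves) :
    c.leafStep θ.entry x (θ.letter θ.entry) = Sum.inr false := by
  rw [leafStep, if_neg θ.depth_le_entry.not_gt, if_neg fun h => θ.letter_entry_ne h.2]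

lemma latentRun_hitStep (θ : c.Secret) (l : List (c.Obs × A)) :
    latentRun (hitStep θ) c.root l = c.refState l ∨ (Live θ l ∧ c.refState l = Sum.inr false) := by
  induction l using List.reverseRecOn with
  | nil => left; simp
  | append_singleton l x ih =>
    unfold Live at ih ⊢
    rw [latentRun_append_singleton, refState_append_singleton]
    rcases ih with ih | ⟨ih, href⟩
    · rw [ih, hitStep]
      split_ifs with h
      · obtain ⟨hlen, hleaf, hletter⟩ := h
        right
        exact ⟨rfl, by rw [hleaf, refStep, hletter, hlen, leafStep_entry]⟩
      · exact Or.inl (missStep_of_ne (refState_ne l) ..)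
    · rw [ih, href, hitStep, if_neg (by simp)]
      simp only [missStep, refStep, Bool.true_and]
      cases decide (x.2 = θ.letter l.length)
      · exact Or.inl rfl
      · exact Or.inr ⟨rfl, trivial⟩

lemma refState_of_live {θ : c.Secret} {l : List (c.Obs × A)} (hl : Live θ l) :
    c.refState l = Sum.inr false :=
  (latentRun_hitStep θ l).elim (fun h => absurd (h.symm.trans hl) (refState_ne l)) And.right

lemma live_mul_self (θ : c.Secret) (l : List (c.Obs × A)) : live θ l * live θ l = live θ l := by
  unfold live
  split_ifs <;> norm_num

lemma live_nonneg (θ : c.Secret) (l : List (c.Obs × A)) : 0 ≤ live θ l := by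
  unfold live
  split_ifs <;> norm_num

lemma live_le_one (θ : c.Secret) (l : List (c.Obs × A)) : live θ l ≤ 1 := by
  unfold live
  split_ifs <;> norm_num

lemma emission_latentRun_missStep (θ : c.Secret) (μ : Fin c.pairs → Bool) (i : ℕ)
    (l : List (c.Obs × A)) (o : c.Obs) :
    c.emission μ i (latentRun (missStep θ) c.root l) o = c.baseEmit (c.refState l) o := by
  rw [latentRun_missStep, emission, if_neg (refState_ne l), add_zero, mul_one]

lemma emission_latentRun_hitStep (θ : c.Secret) (μ : Fin c.pairs → Bool) (i : ℕ)
    (l : List (c.Obs × A)) (o : c.Obs) :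
    c.emission μ i (latentRun (hitStep θ) c.root l) o =
      c.baseEmit (c.refState l) o * (1 + live θ l * c.tilt μ i o) := by
  by_cases hl : Live θ l
  · rw [live, if_pos hl, one_mul, refState_of_live hl, show latentRun _ _ l = _ from hl, emission,
      if_pos rfl]
    cases o <;> rfl
  · rw [(latentRun_hitStep θ l).resolve_right fun h => hl h.1, live, if_neg hl, emission,
      if_neg (refState_ne l), zero_mul]

end ReferenceRun

section Likelihood

variable [DecidableEq A] {c}

/-- The likelihood ratio, against the reference law, of the model in which the entry always
succeeds. -/
def hitLik (θ : c.Secret) (μ : Fin c.pairs → Bool) (l : List (c.Obs × A)) : ℝ :=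
  histFold (fun r l x => r * (1 + live θ l * c.tilt μ l.length x.1)) 1 l

/-- The likelihood ratio of the hard instance against the reference law. -/
def lik (θ : c.Secret) (μ : Fin c.pairs → Bool) (l : List (c.Obs × A)) : ℝ :=
  1 - c.entryProb + c.entryProb * hitLik θ μ l

@[simp] lemma hitLik_nil (θ : c.Secret) (μ : Fin c.pairs → Bool) : hitLik θ μ [] = 1 :=
  histFold_nil ..

lemma hitLik_append_singleton (θ : c.Secret) (μ : Fin c.pairs → Bool) (l : List (c.Obs × A))
    (x : c.Obs × A) :
    hitLik θ μ (l ++ [x]) = hitLik θ μ l * (1 + live θ l * c.tilt μ l.length x.1) :=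
  histFold_append_singleton ..

@[simp] lemma lik_nil (θ : c.Secret) (μ : Fin c.pairs → Bool) : lik θ μ [] = 1 := by
  rw [lik, hitLik_nil]
  ring

lemma lik_append_singleton (θ : c.Secret) (μ : Fin c.pairs → Bool) (l : List (c.Obs × A))
    (x : c.Obs × A) :
    lik θ μ (l ++ [x]) =
      lik θ μ l + c.entryProb * hitLik θ μ l * (live θ l * c.tilt μ l.length x.1) := by
  rw [lik, hitLik_append_singleton, lik]
  ring

variable [Fintype A]

variable (c) in
/-- The kernel of one step of the reference law under the policy `π`. -/
def refKernel (π : Policy c.Obs A) (l : List (c.Obs × A)) (x : c.Obs × A) : ℝ :=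
  c.baseEmit (c.refState l) x.1 * π.act l x.1 x.2

lemma runProb_missStep (θ : c.Secret) (μ : Fin c.pairs → Bool) (π : Policy c.Obs A)
    (τ : Fin (L + 1) → c.Obs × A) :
    (c.model θ μ).runProb (missStep θ) c.root π τ = seqProb (c.refKernel π) τ :=
  prod_congr rfl fun _ _ => congrArg (· * _) (emission_latentRun_missStep ..)

lemma runProb_hitStep (θ : c.Secret) (μ : Fin c.pairs → Bool) (π : Policy c.Obs A)
    (τ : Fin (L + 1) → c.Obs × A) :
    (c.model θ μ).runProb (hitStep θ) c.root π τ =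
      seqProb (c.refKernel π) τ * hitLik θ μ (List.ofFn τ) := by
  rw [hitLik, ← seqProb_eq_histFold fun l x => 1 + live θ l * c.tilt μ l.length x.1]
  unfold seqProb POMDP.runProb
  rw [← prod_mul_distrib]
  refine prod_congr rfl fun h _ => ?_
  have hlen : ((List.ofFn τ).take h.1).length = h.1 := by simp [h.2.le]
  simp only [refKernel, hlen]
  rw [mul_right_comm, ← emission_latentRun_hitStep]
  rfl

lemma trajProb_model (θ : c.Secret) (μ : Fin c.pairs → Bool) (π : Policy c.Obs A)
    (τ : Fin (L + 1) → c.Obs × A) :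
    (c.model θ μ).trajProb π τ = seqProb (c.refKernel π) τ * lik θ μ (List.ofFn τ) := by
  rw [POMDP.trajProb_eq_of_single_coin (M := c.model θ μ)
    (Nat.succ_lt_succ θ.entry_lt_horizon) (fun _ => missStep_eq_hitStep) (fun _ => rfl)
    (fun _ _ _ _ => rfl), runProb_missStep, runProb_hitStep, lik]
  ring

end Likelihood

variable [DecidableEq A] {c}

section Bounds

lemma exp_three_fifths_le_two : Real.exp (3 / 5) ≤ 2 := by
  refine le_of_pow_le_pow_left₀ (n := 5) (by norm_num) (by norm_num) ?_
  calc Real.exp (3 / 5) ^ 5 = Real.exp 1 ^ 3 := by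
        rw [← Real.exp_nat_mul, ← Real.exp_nat_mul]
        norm_num
    _ ≤ (2.8 : ℝ) ^ 3 := by
        gcongr
        linarith [Real.exp_one_lt_d9]
    _ ≤ 2 ^ 5 := by norm_num

lemma abs_live_mul_tilt_le (θ : c.Secret) (μ : Fin c.pairs → Bool) (l : List (c.Obs × A)) (i : ℕ)
    (o : c.Obs) : |live θ l * c.tilt μ i o| ≤ c.tiltScale i := by
  rw [abs_mul, abs_of_nonneg (live_nonneg θ l)]
  exact (mul_le_of_le_one_left (abs_nonneg _) (live_le_one θ l)).trans (c.abs_tilt_le μ i o)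

lemma hitLik_nonneg (θ : c.Secret) (μ : Fin c.pairs → Bool) (l : List (c.Obs × A)) :
    0 ≤ hitLik θ μ l := by
  induction l using List.reverseRecOn with
  | nil => simp
  | append_singleton l x ih =>
    rw [hitLik_append_singleton]
    have htilt := neg_le_of_abs_le
      ((abs_live_mul_tilt_le θ μ l l.length x.1).trans (c.tiltScale_le l.length))
    exact mul_nonneg ih (by linarith)

lemma three_quarters_le_lik (θ : c.Secret) (μ : Fin c.pairs → Bool) (l : List (c.Obs × A)) :
    3 / 4 ≤ lik θ μ l := by
  have := c.entryProb_le
  have := mul_nonneg c.entryProb_nonneg (hitLik_nonneg θ μ l)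
  unfold lik
  linarith

lemma lik_nonneg (θ : c.Secret) (μ : Fin c.pairs → Bool) (l : List (c.Obs × A)) : 0 ≤ lik θ μ l :=
  (by norm_num : (0 : ℝ) ≤ 3 / 4).trans (three_quarters_le_lik θ μ l)

lemma hitLik_mem_Icc_pow (θ : c.Secret) (μ : Fin c.pairs → Bool) (l : List (c.Obs × A))
    (hl : l.length ≤ L) :
    hitLik θ μ l ∈ Set.Icc ((1 - c.tiltSize) ^ l.length) ((1 + c.tiltSize) ^ l.length) := by
  induction l using List.reverseRecOn with
  | nil => simp
  | append_singleton l x ih =>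
    rw [List.length_append, List.length_singleton] at hl ⊢
    obtain ⟨hlower, hupper⟩ := ih (by omega)
    have hpos := c.tiltSize_pos
    have htilt := abs_le.1 (abs_live_mul_tilt_le θ μ l l.length x.1)
    have hsize := c.tiltScale_le l.length
    rw [c.tiltScale_of_ne (by omega : l.length ≠ L)] at htilt hsize
    rw [hitLik_append_singleton, pow_succ, pow_succ]
    exact ⟨mul_le_mul hlower (by linarith) (by linarith) (hitLik_nonneg θ μ l),
      mul_le_mul hupper (by linarith) (by linarith) (by positivity)⟩

lemma hitLik_mem_Icc (θ : c.Secret) (μ : Fin c.pairs → Bool) (l : List (c.Obs × A))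
    (hl : l.length ≤ L) : hitLik θ μ l ∈ Set.Icc (2 / 5) 2 := by
  obtain ⟨hlower, hupper⟩ := hitLik_mem_Icc_pow θ μ l hl
  have hpos := c.tiltSize_pos
  have hsize : l.length * c.tiltSize ≤ 3 / 5 := by
    refine le_trans (mul_le_mul_of_nonneg_right ?_ hpos.le) c.tiltSize_le
    exact_mod_cast hl.trans L.le_succ
  have hsize' : c.tiltSize ≤ 3 / 5 := by
    nlinarith [c.tiltSize_le, mul_nonneg L.cast_nonneg hpos.le]
  constructor
  · have hbernoulli := one_add_mul_le_pow (a := -c.tiltSize) (by linarith) l.length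
    rw [← sub_eq_add_neg] at hbernoulli
    linarith
  · calc hitLik θ μ l ≤ (1 + c.tiltSize) ^ l.length := hupper
      _ ≤ Real.exp c.tiltSize ^ l.length := by
          gcongr
          linarith [Real.add_one_le_exp c.tiltSize]
      _ = Real.exp (l.length * c.tiltSize) := (Real.exp_nat_mul _ _).symm
      _ ≤ Real.exp (3 / 5) := Real.exp_le_exp.2 hsize
      _ ≤ 2 := exp_three_fifths_le_two

/-- The total of the rates `r` over the live indices of a trajectory. -/
def liveCost (r : ℕ → ℝ) (θ : c.Secret) (τ : Fin (L + 1) → c.Obs × A) : ℝ :=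
  ∑ i : Fin (L + 1), live θ ((List.ofFn τ).take i.1) * r i.1

lemma liveCost_mono {r r' : ℕ → ℝ} (hr : ∀ i, r i ≤ r' i) (θ : c.Secret)
    (τ : Fin (L + 1) → c.Obs × A) : liveCost r θ τ ≤ liveCost r' θ τ :=
  sum_le_sum fun _ _ => mul_le_mul_of_nonneg_left (hr _) (live_nonneg _ _)

lemma liveCost_const_mul (a : ℝ) (r : ℕ → ℝ) (θ : c.Secret) (τ : Fin (L + 1) → c.Obs × A) :
    liveCost (fun i => a * r i) θ τ = a * liveCost r θ τ := by
  simp only [liveCost, mul_sum, mul_left_comm]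

lemma liveCost_nonneg {r : ℕ → ℝ} (hr : ∀ i, 0 ≤ r i) (θ : c.Secret)
    (τ : Fin (L + 1) → c.Obs × A) : 0 ≤ liveCost r θ τ :=
  sum_nonneg fun _ _ => mul_nonneg (live_nonneg _ _) (hr _)

end Bounds

section Expectations

variable [Fintype A]

lemma refKernel_nonneg (π : Policy c.Obs A) (l : List (c.Obs × A)) (x : c.Obs × A) :
    0 ≤ c.refKernel π l x :=
  mul_nonneg (c.baseEmit_nonneg _ _) (π.act_nonneg _ _ _)

lemma sum_refKernel_mul (π : Policy c.Obs A) (l : List (c.Obs × A)) (G : c.Obs → ℝ) :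
    ∑ x, c.refKernel π l x * G x.1 = ∑ o, c.baseEmit (c.refState l) o * G o := by
  rw [Fintype.sum_prod_type]
  refine sum_congr rfl fun o _ => ?_
  simp only [refKernel]
  rw [← sum_mul, ← mul_sum, π.act_sum, mul_one]

lemma sum_refKernel (π : Policy c.Obs A) (l : List (c.Obs × A)) : ∑ x, c.refKernel π l x = 1 := by
  have h := sum_refKernel_mul π l fun _ => 1
  simp only [mul_one, sum_baseEmit] at h
  exact h

lemma sum_refKernel_mul_tilt (μ : Fin c.pairs → Bool) (i : ℕ) (π : Policy c.Obs A)
    (l : List (c.Obs × A)) : ∑ x, c.refKernel π l x * c.tilt μ i x.1 = 0 := by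
  rw [sum_refKernel_mul, sum_baseEmit_mul_tilt]

lemma live_mul_sum_refKernel_mul_tilt_mul_tilt (θ : c.Secret) (μ ν : Fin c.pairs → Bool) (i : ℕ)
    (π : Policy c.Obs A) (l : List (c.Obs × A)) :
    live θ l * ∑ x, c.refKernel π l x * (c.tilt μ i x.1 * c.tilt ν i x.1) =
      live θ l * (c.tiltScale i ^ 2 * signCorr (c.pattern μ i) (c.pattern ν i)) := by
  unfold live
  split_ifs with hl
  · rw [sum_refKernel_mul π l fun o => c.tilt μ i o * c.tilt ν i o, refState_of_live hl,
      sum_baseEmit_inr_mul_tilt_mul_tilt]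
  · rw [zero_mul, zero_mul]

lemma sum_refKernel_mul_hitLik (θ : c.Secret) (μ : Fin c.pairs → Bool) (π : Policy c.Obs A)
    (l : List (c.Obs × A)) :
    ∑ x, c.refKernel π l x * hitLik θ μ (l ++ [x]) = hitLik θ μ l := by
  calc _ = hitLik θ μ l * (∑ x, c.refKernel π l x) + hitLik θ μ l * live θ l *
        ∑ x, c.refKernel π l x * c.tilt μ l.length x.1 := by
        simp only [mul_sum, ← sum_add_distrib, hitLik_append_singleton]
        exact sum_congr rfl fun x _ => by ring
    _ = hitLik θ μ l := by rw [sum_refKernel_mul_tilt, sum_refKernel]; ring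

lemma sum_refKernel_mul_lik (θ : c.Secret) (μ : Fin c.pairs → Bool) (π : Policy c.Obs A)
    (l : List (c.Obs × A)) : ∑ x, c.refKernel π l x * lik θ μ (l ++ [x]) = lik θ μ l := by
  calc _ = (1 - c.entryProb) * (∑ x, c.refKernel π l x) +
        c.entryProb * ∑ x, c.refKernel π l x * hitLik θ μ (l ++ [x]) := by
        simp only [mul_sum, ← sum_add_distrib, lik]
        exact sum_congr rfl fun x _ => by ring
    _ = lik θ μ l := by rw [sum_refKernel, sum_refKernel_mul_hitLik, lik, mul_one]

lemma sum_seqProb_mul_hitLik (θ : c.Secret) (μ : Fin c.pairs → Bool) (π : Policy c.Obs A) (n : ℕ) :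
    ∑ τ : Fin n → c.Obs × A, seqProb (c.refKernel π) τ * hitLik θ μ (List.ofFn τ) = 1 :=
  (sum_seqProb_mul_of_martingale (c.refKernel π) (hitLik θ μ) n
    fun l _ => sum_refKernel_mul_hitLik θ μ π l).trans (hitLik_nil θ μ)

lemma sum_seqProb_mul_lik (θ : c.Secret) (μ : Fin c.pairs → Bool) (π : Policy c.Obs A) (n : ℕ) :
    ∑ τ : Fin n → c.Obs × A, seqProb (c.refKernel π) τ * lik θ μ (List.ofFn τ) = 1 :=
  (sum_seqProb_mul_of_martingale (c.refKernel π) (lik θ μ) n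
    fun l _ => sum_refKernel_mul_lik θ μ π l).trans (lik_nil θ μ)

/-- In the conditional second moment the cross terms have mean zero, and only the correlation of
the tilts remains. -/
lemma sum_refKernel_mul_lik_mul_lik (θ : c.Secret) (μ ν : Fin c.pairs → Bool) (π : Policy c.Obs A)
    (l : List (c.Obs × A)) :
    ∑ x, c.refKernel π l x * (lik θ μ (l ++ [x]) * lik θ ν (l ++ [x])) =
      lik θ μ l * lik θ ν l + c.entryProb ^ 2 * (hitLik θ μ l * hitLik θ ν l) * (live θ l *
        (c.tiltScale l.length ^ 2 *
          signCorr (c.pattern μ l.length) (c.pattern ν l.length))) := by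
  calc _ = lik θ μ l * lik θ ν l * (∑ x, c.refKernel π l x)
        + lik θ ν l * c.entryProb * hitLik θ μ l * live θ l *
            (∑ x, c.refKernel π l x * c.tilt μ l.length x.1)
        + lik θ μ l * c.entryProb * hitLik θ ν l * live θ l *
            (∑ x, c.refKernel π l x * c.tilt ν l.length x.1)
        + c.entryProb ^ 2 * (hitLik θ μ l * hitLik θ ν l) * (live θ l *
            ∑ x, c.refKernel π l x * (c.tilt μ l.length x.1 * c.tilt ν l.length x.1)) := by
        simp only [mul_sum, ← sum_add_distrib]
        refine sum_congr rfl fun x _ => ?_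
        rw [lik_append_singleton, lik_append_singleton]
        linear_combination (c.entryProb ^ 2 * (hitLik θ μ l * hitLik θ ν l) * c.refKernel π l x *
          (c.tilt μ l.length x.1 * c.tilt ν l.length x.1)) * live_mul_self θ l
    _ = _ := by
        rw [sum_refKernel_mul_tilt, sum_refKernel_mul_tilt,
          live_mul_sum_refKernel_mul_tilt_mul_tilt, sum_refKernel]
        ring

end Expectations

section SecondMoment

variable (c) in
/-- The information that a live index `i` provides for telling the patterns `μ` and `ν` apart. -/
def corrRate (μ ν : Fin c.pairs → Bool) (i : ℕ) : ℝ :=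
  16 * c.entryProb ^ 2 * (c.tiltScale i ^ 2 * |signCorr (c.pattern μ i) (c.pattern ν i)|)

lemma entryProb_sq_mul_hitLik_mul_hitLik_le (θ : c.Secret) (μ ν : Fin c.pairs → Bool)
    {l : List (c.Obs × A)} (hl : l.length ≤ L) :
    c.entryProb ^ 2 * (hitLik θ μ l * hitLik θ ν l) * (c.tiltScale l.length ^ 2 *
        signCorr (c.pattern μ l.length) (c.pattern ν l.length)) ≤
      lik θ μ l * lik θ ν l * c.corrRate μ ν l.length := by
  obtain ⟨-, hμ⟩ := hitLik_mem_Icc θ μ l hl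
  obtain ⟨-, hν⟩ := hitLik_mem_Icc θ ν l hl
  have hμ0 := hitLik_nonneg θ μ l
  have hν0 := hitLik_nonneg θ ν l
  have hlik : 1 / 4 ≤ lik θ μ l * lik θ ν l := by
    nlinarith [three_quarters_le_lik θ μ l, three_quarters_le_lik θ ν l]
  set r := |signCorr (c.pattern μ l.length) (c.pattern ν l.length)|
  calc _ ≤ c.entryProb ^ 2 * (hitLik θ μ l * hitLik θ ν l) * (c.tiltScale l.length ^ 2 * r) := by
        gcongr
        exact le_abs_self _
    _ ≤ c.entryProb ^ 2 * (2 * 2) * (c.tiltScale l.length ^ 2 * r) := by gcongr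
    _ = 1 / 4 * c.corrRate μ ν l.length := by rw [corrRate]; ring
    _ ≤ lik θ μ l * lik θ ν l * c.corrRate μ ν l.length := by
        refine mul_le_mul_of_nonneg_right hlik ?_
        unfold corrRate
        positivity

variable [Fintype A]

lemma sum_seqProb_mul_lik_mul_lik_mul_exp_le (θ : c.Secret) (μ ν : Fin c.pairs → Bool)
    (π : Policy c.Obs A) :
    ∑ τ : Fin (L + 1) → c.Obs × A, seqProb (c.refKernel π) τ *
      (lik θ μ (List.ofFn τ) * lik θ ν (List.ofFn τ) *
        Real.exp (-liveCost (c.corrRate μ ν) θ τ)) ≤ 1 := by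
  have hstep : ∀ l : List (c.Obs × A), l.length < L + 1 →
      ∑ x, c.refKernel π l x * (lik θ μ (l ++ [x]) * lik θ ν (l ++ [x])) ≤
        lik θ μ l * lik θ ν l * (1 + live θ l * c.corrRate μ ν l.length) := by
    intro l hl
    rw [sum_refKernel_mul_lik_mul_lik]
    have hle := mul_le_mul_of_nonneg_left
      (entryProb_sq_mul_hitLik_mul_hitLik_le θ μ ν (Nat.lt_succ_iff.1 hl)) (live_nonneg θ l)
    linarith
  refine (le_of_eq ?_).trans ((sum_seqProb_mul_exp_neg_sum_le (refKernel_nonneg π)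
    (fun l => mul_nonneg (lik_nonneg θ μ l) (lik_nonneg θ ν l)) (L + 1) hstep).trans_eq ?_)
  · refine sum_congr rfl fun τ _ => ?_
    have hlen : ∀ i : Fin (L + 1), ((List.ofFn τ).take i.1).length = i.1 := fun i => by
      simp [i.2.le]
    simp only [liveCost, hlen]
  · rw [lik_nil, lik_nil, one_mul]

end SecondMoment

lemma refState_of_length {l : List (c.Obs × A)} (hl : c.depth + c.window < l.length) :
    c.refState l = Sum.inr false := by
  rcases l.eq_nil_or_concat' with rfl | ⟨l, x, rfl⟩
  · simp at hl
  · rw [List.length_append, List.length_singleton] at hl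
    rw [refState_append_singleton]
    rcases c.refState l with y | b
    · rw [refStep, leafStep, if_neg (by omega), if_neg (by omega)]
    · rfl

section Values

variable [Fintype A]

/-- The probability, in the model in which the entry always succeeds, of occupying the good lock
state at the last step. -/
def finalLive (θ : c.Secret) (μ : Fin c.pairs → Bool) (π : Policy c.Obs A) : ℝ :=
  ∑ τ : Fin L → c.Obs × A,
    seqProb (c.refKernel π) τ * (hitLik θ μ (List.ofFn τ) * live θ (List.ofFn τ))

lemma sum_trajProb_model_mul (θ : c.Secret) (μ : Fin c.pairs → Bool) (π : Policy c.Obs A)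
    (F : (Fin (L + 1) → c.Obs × A) → ℝ) :
    ∑ τ, (c.model θ μ).trajProb π τ * F τ = ∑ τ : Fin L → c.Obs × A, seqProb (c.refKernel π) τ *
      ∑ x, c.refKernel π (List.ofFn τ) x *
        (lik θ μ (List.ofFn τ ++ [x]) * F (Fin.snoc τ x : Fin (L + 1) → c.Obs × A)) := by
  simp only [trajProb_model]
  rw [sum_eq_sum_snoc]
  simp only [seqProb_snoc, ofFn_snoc, mul_sum, mul_assoc]

lemma sum_reward_model (θ : c.Secret) (μ : Fin c.pairs → Bool) (τ : Fin (L + 1) → c.Obs × A) :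
    ∑ h : Fin (L + 1), (c.model θ μ).reward (h.1 + 1) (τ h).1 (τ h).2 =
      if c.rewarded (τ (Fin.last L)).1 then 1 else 0 := by
  rw [sum_eq_single (Fin.last L)]
  · simp [model]
  · exact fun h _ hne => if_neg fun hh => hne (Fin.ext (Nat.succ_injective hh.1))
  · exact fun h => absurd (mem_univ _) h

lemma sum_refKernel_mul_lik_mul_rewarded (θ : c.Secret) (μ : Fin c.pairs → Bool)
    (π : Policy c.Obs A) {l : List (c.Obs × A)} (hl : l.length = L) :
    ∑ x, c.refKernel π l x * (lik θ μ (l ++ [x]) * if c.rewarded x.1 then 1 else 0) =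
      1 / 2 * lik θ μ l + c.entryProb / 4 * (hitLik θ μ l * live θ l) := by
  have href : c.refState l = Sum.inr false :=
    refState_of_length (c.depth_add_window_lt.trans_eq hl.symm)
  have hbase : ∑ x, c.refKernel π l x * (if c.rewarded x.1 then 1 else 0) = 1 / 2 := by
    rw [sum_refKernel_mul π l fun o => if c.rewarded o then 1 else 0, href,
      sum_baseEmit_inr_mul_rewarded]
  have htilt : ∑ x, c.refKernel π l x * (c.tilt μ L x.1 * if c.rewarded x.1 then 1 else 0) =
      1 / 4 := by
    rw [sum_refKernel_mul π l fun o => c.tilt μ L o * if c.rewarded o then 1 else 0, href,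
      sum_baseEmit_inr_mul_tilt_mul_rewarded]
  calc _ = lik θ μ l * (∑ x, c.refKernel π l x * (if c.rewarded x.1 then 1 else 0)) +
        c.entryProb * hitLik θ μ l * live θ l *
          ∑ x, c.refKernel π l x * (c.tilt μ L x.1 * if c.rewarded x.1 then 1 else 0) := by
        simp only [lik_append_singleton, hl, mul_sum, ← sum_add_distrib]
        exact sum_congr rfl fun x _ => by ring
    _ = _ := by rw [hbase, htilt]; ring

lemma value_model (θ : c.Secret) (μ : Fin c.pairs → Bool) (π : Policy c.Obs A) :
    (c.model θ μ).value π = 1 / 2 + c.entryProb / 4 * finalLive θ μ π := by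
  simp only [POMDP.value, sum_reward_model]
  rw [sum_trajProb_model_mul]
  simp only [Fin.snoc_last, sum_refKernel_mul_lik_mul_rewarded θ μ π (List.length_ofFn)]
  have hone := sum_seqProb_mul_lik θ μ π L
  calc _ = 1 / 2 * (∑ τ : Fin L → c.Obs × A, seqProb (c.refKernel π) τ * lik θ μ (List.ofFn τ)) +
        c.entryProb / 4 * finalLive θ μ π := by
        simp only [finalLive, mul_sum, ← sum_add_distrib]
        exact sum_congr rfl fun τ _ => by ring
    _ = _ := by rw [hone, mul_one]

lemma sum_trajProb_mul_one_sub_live_le (θ : c.Secret) (μ : Fin c.pairs → Bool)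
    (π : Policy c.Obs A) :
    ∑ τ, (c.model θ μ).trajProb π τ * (1 - live θ ((List.ofFn τ).take L)) ≤
      5 / 2 * (1 - finalLive θ μ π) := by
  have hone : 1 - finalLive θ μ π = ∑ τ : Fin L → c.Obs × A, seqProb (c.refKernel π) τ *
      (hitLik θ μ (List.ofFn τ) * (1 - live θ (List.ofFn τ))) := by
    simp only [mul_sub, mul_one, sum_sub_distrib, sum_seqProb_mul_hitLik, finalLive]
  rw [sum_trajProb_model_mul, hone, mul_sum]
  refine sum_le_sum fun τ _ => ?_
  simp only [take_ofFn_snoc_last, ← mul_assoc (c.refKernel _ _ _), ← sum_mul,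
    sum_refKernel_mul_lik]
  have hlower := (hitLik_mem_Icc θ μ (List.ofFn τ) List.length_ofFn.le).1
  have hlik : lik θ μ (List.ofFn τ) ≤ 5 / 2 * hitLik θ μ (List.ofFn τ) := by
    rw [lik]
    nlinarith [c.entryProb_nonneg, c.entryProb_le]
  calc _ ≤ seqProb (c.refKernel π) τ *
        (5 / 2 * hitLik θ μ (List.ofFn τ) * (1 - live θ (List.ofFn τ))) :=
        mul_le_mul_of_nonneg_left
          (mul_le_mul_of_nonneg_right hlik (sub_nonneg.2 (live_le_one θ _)))
          (seqProb_nonneg (refKernel_nonneg π) τ)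
    _ = _ := by ring

end Values

section OptimalPolicy

/-- The optimal action at index `i`: select the rewarding leaf, wait, and type the password. -/
def optAct (θ : c.Secret) (i : ℕ) : A :=
  if i < c.depth then (if θ.leaf.1.testBit i then c.move else c.wait)
  else if i < θ.entry then c.wait else θ.letter i

/-- The policy playing `optAct`. -/
def optPolicy [Fintype A] (θ : c.Secret) : Policy c.Obs A where
  act l _ a := if a = optAct θ l.length then 1 else 0
  act_nonneg l _ a := by split_ifs <;> norm_num
  act_sum l _ := by rw [sum_ite_eq', if_pos (mem_univ _)]

lemma setDigit_optAct (θ : c.Secret) {i : ℕ} {x : Fin c.leaves} (hi : i < c.depth)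
    (hx : x.1 = θ.leaf.1 % 2 ^ i) :
    (c.setDigit i x (optAct θ i)).1 = θ.leaf.1 % 2 ^ (i + 1) := by
  have hdigit : θ.leaf.1 % 2 ^ (i + 1) =
      θ.leaf.1 % 2 ^ i + 2 ^ i * (θ.leaf.1.testBit i).toNat := by
    rw [Nat.mod_pow_succ, Nat.toNat_testBit]
  have hlt : θ.leaf.1 % 2 ^ (i + 1) < c.leaves := (Nat.mod_le _ _).trans_lt θ.leaf.2
  rw [setDigit, optAct, if_pos hi]
  cases hb : θ.leaf.1.testBit i
  · rw [hb, Bool.toNat_false, mul_zero, add_zero] at hdigit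
    simp [c.wait_ne_move, hx, hdigit]
  · rw [hb, Bool.toNat_true, mul_one, ← hx] at hdigit
    simp [← hdigit, hlt]

/-- Before the entry the optimal actions build up the binary digits of the rewarding leaf. -/
lemma latentRun_optAct_before (θ : c.Secret) {N : ℕ} {τ : Fin N → c.Obs × A}
    (hτ : ∀ i, (τ i).2 = optAct θ i.1) {k : ℕ} (hkN : k ≤ N) (hk : k ≤ θ.entry) :
    ∃ x : Fin c.leaves, x.1 = θ.leaf.1 % 2 ^ min k c.depth ∧
      latentRun (hitStep θ) c.root ((List.ofFn τ).take k) = Sum.inl x := by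
  induction k with
  | zero => exact ⟨⟨0, c.leaves_pos⟩, by simp [Nat.mod_one], by simp [root]⟩
  | succ k ih =>
    obtain ⟨x, hx, hrun⟩ := ih (by omega) (by omega)
    rw [latentRun_take_succ _ _ τ (by omega), hrun, hτ, hitStep, if_neg (by omega), missStep,
      leafStep]
    by_cases hd : k < c.depth
    · rw [if_pos hd, min_eq_left (by omega)]
      exact ⟨_, setDigit_optAct θ hd (by rw [hx, min_eq_left hd.le]), rfl⟩
    · have hlt : k < θ.entry := hk
      have hact : optAct θ k = c.wait := by rw [optAct, if_neg hd, if_pos hlt]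
      rw [if_neg hd, if_pos ⟨hlt.trans θ.entry_lt, hact⟩]
      exact ⟨x, by rw [hx, min_eq_right (by omega), min_eq_right (by omega)], rfl⟩

lemma latentRun_optAct_after (θ : c.Secret) {N : ℕ} {τ : Fin N → c.Obs × A}
    (hτ : ∀ i, (τ i).2 = optAct θ i.1) {k : ℕ} (hkN : k ≤ N) (hk : θ.entry < k) :
    latentRun (hitStep θ) c.root ((List.ofFn τ).take k) = Sum.inr true := by
  induction k, hk using Nat.le_induction with
  | base =>
    obtain ⟨x, hx, hrun⟩ := latentRun_optAct_before θ hτ (Nat.le_of_succ_le hkN) le_rfl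
    have hxleaf : x = θ.leaf := Fin.ext <| by
      rw [hx, min_eq_right θ.depth_le_entry, Nat.mod_eq_of_lt (θ.leaf.2.trans_le c.leaves_le)]
    have hact : optAct θ θ.entry = θ.letter θ.entry := by
      rw [optAct, if_neg θ.depth_le_entry.not_gt, if_neg (lt_irrefl _)]
    rw [latentRun_take_succ _ _ τ hkN, hrun, hτ, hitStep, if_pos ⟨rfl, congrArg _ hxleaf, hact⟩]
  | succ k hk ih =>
    have hact : optAct θ k = θ.letter k := by
      rw [optAct, if_neg (θ.depth_le_entry.trans_lt hk).not_gt,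
        if_neg (Nat.le_of_succ_le hk).not_gt]
    rw [latentRun_take_succ _ _ τ hkN, ih (Nat.le_of_succ_le hkN), hτ, hitStep, if_neg (by simp),
      missStep, hact, decide_eq_true rfl, Bool.and_true]

variable [Fintype A]

lemma finalLive_optPolicy (θ : c.Secret) (μ : Fin c.pairs → Bool) :
    finalLive θ μ (optPolicy θ) = 1 := by
  rw [finalLive, ← sum_seqProb_mul_hitLik θ μ (optPolicy θ) L]
  refine sum_congr rfl fun τ _ => ?_
  by_cases hτ : ∀ i, (τ i).2 = optAct θ i.1
  · have hlive : Live θ (List.ofFn τ) := by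
      have h := latentRun_optAct_after θ hτ le_rfl θ.entry_lt_horizon
      rwa [List.take_of_length_le List.length_ofFn.le] at h
    rw [live, if_pos hlive, mul_one]
  · push Not at hτ
    obtain ⟨i, hi⟩ := hτ
    have hzero : seqProb (c.refKernel (optPolicy θ)) τ = 0 :=
      prod_eq_zero (mem_univ i) (by simp [refKernel, optPolicy, i.2.le, hi])
    rw [hzero, zero_mul, zero_mul]

lemma sum_trajProb_mul_miss_le (θ : c.Secret) (μ : Fin c.pairs → Bool) (π : Policy c.Obs A) :
    ∑ τ, (c.model θ μ).trajProb π τ *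
        (c.entryProb / 10 * (1 - live θ ((List.ofFn τ).take L))) ≤
      (c.model θ μ).optValue - (c.model θ μ).value π := by
  have hopt := (c.model θ μ).value_le_optValue (optPolicy θ)
  rw [value_model, finalLive_optPolicy] at hopt
  have hmiss := mul_le_mul_of_nonneg_left (sum_trajProb_mul_one_sub_live_le θ μ π)
    (div_nonneg c.entryProb_nonneg (by norm_num : (0 : ℝ) ≤ 10))
  simp only [mul_left_comm _ (c.entryProb / 10), ← mul_sum]
  rw [value_model]
  linarith

end OptimalPolicy

end LockConfig

/-! ### Counting the live secrets -/

lemma card_filter_forall_mem_eq {ι α : Type*} [Fintype ι] [DecidableEq ι] [Fintype α]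
    (s : Finset ι) (f : ι → α) [DecidablePred fun p : ι → α => ∀ i ∈ s, p i = f i] :
    #{p : ι → α | ∀ i ∈ s, p i = f i} = Fintype.card α ^ #sᶜ := by
  have hpi : ({p : ι → α | ∀ i ∈ s, p i = f i} : Finset (ι → α)) =
      Fintype.piFinset fun i => if i ∈ s then {f i} else univ := by
    ext p
    rw [mem_filter_univ, Fintype.mem_piFinset]
    refine forall_congr' fun i => ?_
    by_cases hi : i ∈ s <;> simp [hi]
  rw [hpi, Fintype.card_piFinset, ← prod_const, ← prod_mul_prod_compl s, prod_eq_one, one_mul]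
  · exact prod_congr rfl fun i hi => by rw [if_neg (mem_compl.1 hi), card_univ]
  · exact fun i hi => by rw [if_pos hi, card_singleton]

lemma sum_range_ite_lt_pow_sub_le {x : ℝ} (hx : 0 ≤ x) (hx1 : x < 1) (e n : ℕ) :
    ∑ i ∈ range n, (if e < i then x ^ (i - e) else 0) ≤ x / (1 - x) := by
  have hIco : {i ∈ range n | e < i} = Ico (e + 1) n := by
    ext i
    simp only [mem_filter, mem_range, mem_Ico]
    omega
  calc ∑ i ∈ range n, (if e < i then x ^ (i - e) else 0)
      = x * ∑ i ∈ range (n - (e + 1)), x ^ i := by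
        rw [← sum_filter, hIco, sum_Ico_eq_sum_range, mul_sum]
        refine sum_congr rfl fun i _ => ?_
        rw [← pow_succ']
        congr 1
        omega
    _ ≤ x / (1 - x) := by
        rw [le_div_iff₀ (sub_pos.2 hx1), mul_assoc, geom_sum_mul_neg]
        exact mul_le_of_le_one_right hx (sub_le_self _ (by positivity))

namespace LockConfig

variable {A : Type} [DecidableEq A] {L : ℕ} {c : LockConfig A L}

section LivePrefixes

lemma hitStep_eq_inr_true_iff (θ : c.Secret) (i : ℕ) (s : c.State) (a : A) :
    hitStep θ i s a = Sum.inr true ↔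
      a = θ.letter i ∧ (i = θ.entry ∧ s = Sum.inl θ.leaf ∨ s = Sum.inr true) := by
  rcases s with x | b
  · have hmiss : missStep θ i (Sum.inl x) a ≠ Sum.inr true := refStep_ne i (Sum.inl x) a
    rw [hitStep]
    split_ifs with h
    · simp only [h, true_and, true_or]
    · simp only [hmiss, or_false, false_iff]
      tauto
  · simp [hitStep, missStep, and_comm]

variable {n : ℕ} {τ : Fin n → c.Obs × A} {θ θ' : c.Secret} {k k' : ℕ}

lemma run_of_live_take (hk : k ≤ n) (hlive : Live θ ((List.ofFn τ).take k)) :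
    θ.entry < k ∧
      latentRun (hitStep θ) c.root ((List.ofFn τ).take θ.entry) = Sum.inl θ.leaf ∧
      ∀ i (hi : i < n), θ.entry ≤ i → i < k → (τ ⟨i, hi⟩).2 = θ.letter i := by
  induction k with
  | zero => simp [Live, root] at hlive
  | succ k ih =>
    rw [Live, latentRun_take_succ _ _ τ hk, hitStep_eq_inr_true_iff] at hlive
    obtain ⟨hletter, ⟨rfl, hleaf⟩ | hlive⟩ := hlive
    · refine ⟨Nat.lt_succ_self _, hleaf, fun i hi hle hlt => ?_⟩
      obtain rfl : i = θ.entry := by omega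
      exact hletter
    · obtain ⟨hentry, hleaf, hletters⟩ := ih (Nat.le_of_lt hk) hlive
      refine ⟨hentry.trans (Nat.lt_succ_self k), hleaf, fun i hi hle hlt => ?_⟩
      rcases Nat.lt_succ_iff_lt_or_eq.1 hlt with hlt | rfl
      · exact hletters i hi hle hlt
      · exact hletter

lemma refState_take_entry (hk : k ≤ n) (hlive : Live θ ((List.ofFn τ).take k)) :
    c.refState ((List.ofFn τ).take θ.entry) = Sum.inl θ.leaf := by
  obtain ⟨-, hleaf, -⟩ := run_of_live_take hk hlive
  rcases latentRun_hitStep θ ((List.ofFn τ).take θ.entry) with h | ⟨h, -⟩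
  · exact h.symm.trans hleaf
  · exact absurd (hleaf.symm.trans h) (by simp)

lemma refState_take_of_entry_lt (hk : k ≤ n) (hlive : Live θ ((List.ofFn τ).take k)) {j : ℕ}
    (hj : θ.entry < j) (hjn : j ≤ n) : c.refState ((List.ofFn τ).take j) = Sum.inr false := by
  induction j, hj using Nat.le_induction with
  | base =>
    obtain ⟨hentry, -, hletters⟩ := run_of_live_take hk hlive
    rw [refState, latentRun_take_succ _ _ τ hjn, ← refState, refState_take_entry hk hlive,
      hletters _ _ le_rfl hentry]
    exact leafStep_entry _
  | succ j _ ih =>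
    rw [refState, latentRun_take_succ _ _ τ hjn, ← refState, ih (Nat.le_of_lt hjn)]
    rfl

lemma entry_le_of_live (hk : k ≤ n) (hk' : k' ≤ n) (hlive : Live θ ((List.ofFn τ).take k))
    (hlive' : Live θ' ((List.ofFn τ).take k')) : θ'.entry ≤ θ.entry := by
  by_contra! hlt
  have hentry' := (run_of_live_take hk' hlive').1
  have hbad := refState_take_of_entry_lt hk hlive hlt (by omega)
  exact absurd ((refState_take_entry hk' hlive').symm.trans hbad) (by simp)

lemma entry_eq_and_leaf_eq_of_live (hk : k ≤ n) (hk' : k' ≤ n)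
    (hlive : Live θ ((List.ofFn τ).take k)) (hlive' : Live θ' ((List.ofFn τ).take k')) :
    θ'.entry = θ.entry ∧ θ'.leaf = θ.leaf := by
  have hentry := le_antisymm (entry_le_of_live hk hk' hlive hlive')
    (entry_le_of_live hk' hk hlive' hlive)
  have hleaf := refState_take_entry hk' hlive'
  rw [hentry, refState_take_entry hk hlive] at hleaf
  exact ⟨hentry, (Sum.inl_injective hleaf).symm⟩

end LivePrefixes

section Counting

variable [Fintype A]

instance : Fintype c.Secret := inferInstanceAs (Fintype {_p : _ // _})

lemma card_filter_live_take_le (τ : Fin (L + 1) → c.Obs × A) {θ₀ : c.Secret} {k₀ k : ℕ}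
    (hk₀ : k₀ ≤ L + 1) (hlive₀ : Live θ₀ ((List.ofFn τ).take k₀)) (hk : k ≤ L) :
    #{θ : c.Secret | Live θ ((List.ofFn τ).take k)} ≤
      Fintype.card A ^ (L - (k - θ₀.entry)) := by
  have hrange : ∀ i ∈ Ico θ₀.entry k, i < L := fun i hi => (mem_Ico.1 hi).2.trans_le hk
  have hcard := card_filter_forall_mem_eq ((Ico θ₀.entry k).attachFin hrange)
    fun i => (τ i.castSucc).2
  rw [card_compl, card_attachFin, Nat.card_Ico, Fintype.card_fin] at hcard
  rw [← hcard]
  have hkL : k ≤ L + 1 := hk.trans L.le_succ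
  refine card_le_card_of_injOn (fun θ => θ.1.2.2) (fun θ hθ => ?_) fun θ hθ θ' hθ' heq => ?_
  · have hlive := (mem_filter.1 hθ).2
    obtain ⟨hentry, -⟩ := entry_eq_and_leaf_eq_of_live hk₀ hkL hlive₀ hlive
    refine mem_filter.2 ⟨mem_univ _, fun i hi => ?_⟩
    obtain ⟨hle, hlt⟩ := mem_Ico.1 ((mem_attachFin hrange).1 hi)
    have hletter := (run_of_live_take hkL hlive).2.2 i (i.2.trans L.lt_succ_self)
      (hentry.trans_le hle) hlt
    rw [Secret.letter, dif_pos i.2] at hletter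
    exact hletter.symm
  · obtain ⟨hentry, hleaf⟩ := entry_eq_and_leaf_eq_of_live hkL hkL (mem_filter.1 hθ').2
      (mem_filter.1 hθ).2
    exact Secret.ext_leaf_entry_letters hleaf hentry heq

lemma sum_live_take_le (τ : Fin (L + 1) → c.Obs × A) {θ₀ : c.Secret} {k₀ k : ℕ} (hk₀ : k₀ ≤ L + 1)
    (hlive₀ : Live θ₀ ((List.ofFn τ).take k₀)) (hk : k ≤ L) :
    ∑ θ : c.Secret, live θ ((List.ofFn τ).take k) ≤
      if θ₀.entry < k then (Fintype.card A : ℝ) ^ L * (Fintype.card A : ℝ)⁻¹ ^ (k - θ₀.entry)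
      else 0 := by
  have hsum : ∑ θ : c.Secret, live θ ((List.ofFn τ).take k) =
      #{θ : c.Secret | Live θ ((List.ofFn τ).take k)} := by
    simp only [live, sum_boole]
  rw [hsum]
  split_ifs with hlt
  · have : Nonempty A := ⟨c.wait⟩
    have hq : (Fintype.card A : ℝ) ≠ 0 := by simp
    rw [inv_pow, ← pow_sub₀ _ hq (by omega)]
    exact_mod_cast card_filter_live_take_le τ hk₀ hlive₀ hk
  · refine (Nat.cast_eq_zero.2 (card_eq_zero.2 (filter_eq_empty_iff.2 fun θ _ hlive => ?_))).le
    have hkL : k ≤ L + 1 := hk.trans L.le_succ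
    have hentry := (entry_eq_and_leaf_eq_of_live hk₀ hkL hlive₀ hlive).1
    exact hlt (hentry ▸ (run_of_live_take hkL hlive).1)

/-- The rate which is `b` at the last index and `a` before. -/
def twoRate (L : ℕ) (a b : ℝ) (i : ℕ) : ℝ := if i = L then b else a

lemma sum_liveCost_twoRate (a b : ℝ) (τ : Fin (L + 1) → c.Obs × A) :
    ∑ θ : c.Secret, liveCost (twoRate L a b) θ τ =
      (∑ i ∈ range L, ∑ θ : c.Secret, live θ ((List.ofFn τ).take i)) * a +
        (∑ θ : c.Secret, live θ ((List.ofFn τ).take L)) * b := by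
  simp only [liveCost]
  rw [sum_comm, Fin.sum_univ_castSucc]
  simp only [← sum_mul, Fin.val_castSucc, Fin.val_last, twoRate, if_true, Fin.is_lt, ne_of_lt,
    if_false]
  rw [Fin.sum_univ_eq_sum_range fun i => ∑ θ : c.Secret, live θ ((List.ofFn τ).take i)]

lemma sum_liveCost_twoRate_le_of_live (hcard : 3 ≤ Fintype.card A) {a b : ℝ} (ha : 0 ≤ a)
    (hb : 0 ≤ b) (τ : Fin (L + 1) → c.Obs × A) {θ₀ : c.Secret} {k₀ : ℕ} (hk₀ : k₀ ≤ L + 1)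
    (hlive₀ : Live θ₀ ((List.ofFn τ).take k₀)) :
    ∑ θ : c.Secret, liveCost (twoRate L a b) θ τ ≤
      (Fintype.card A : ℝ) ^ L * (a * (3 / (2 * Fintype.card A)) +
        b / (Fintype.card A : ℝ) ^ (L + 1 - c.depth - c.window)) := by
  have hq3 : (3 : ℝ) ≤ Fintype.card A := by exact_mod_cast hcard
  set q : ℝ := ((Fintype.card A : ℕ) : ℝ)
  have hlive := fun k (hk : k ≤ L) => sum_live_take_le τ hk₀ hlive₀ hk
  have hq1 : q⁻¹ < 1 := inv_lt_one_of_one_lt₀ (by linarith)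
  have hgeom : ∑ i ∈ range L, (if θ₀.entry < i then q⁻¹ ^ (i - θ₀.entry) else 0) ≤
      3 / (2 * q) := by
    refine (sum_range_ite_lt_pow_sub_le (by positivity) hq1 _ _).trans ?_
    rw [show q⁻¹ / (1 - q⁻¹) = 1 / (q - 1) by field_simp,
      div_le_div_iff₀ (by linarith) (by linarith)]
    linarith
  have hlast : q⁻¹ ^ (L - θ₀.entry) ≤ 1 / q ^ (L + 1 - c.depth - c.window) := by
    have := θ₀.entry_lt
    rw [one_div, ← inv_pow]
    exact pow_le_pow_of_le_one (by positivity) hq1.le (by omega)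
  calc ∑ θ : c.Secret, liveCost (twoRate L a b) θ τ
      ≤ (∑ i ∈ range L, q ^ L * (if θ₀.entry < i then q⁻¹ ^ (i - θ₀.entry) else 0)) * a +
        q ^ L * q⁻¹ ^ (L - θ₀.entry) * b := by
        rw [sum_liveCost_twoRate]
        gcongr with i hi
        · simpa only [mul_ite, mul_zero] using hlive i (mem_range.1 hi).le
        · simpa only [if_pos θ₀.entry_lt_horizon] using hlive L le_rfl
    _ = q ^ L * (a * (∑ i ∈ range L, if θ₀.entry < i then q⁻¹ ^ (i - θ₀.entry) else 0) +
        b * q⁻¹ ^ (L - θ₀.entry)) := by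
        rw [← mul_sum]
        ring
    _ ≤ q ^ L * (a * (3 / (2 * q)) + b * (1 / q ^ (L + 1 - c.depth - c.window))) := by
        gcongr
    _ = _ := by rw [mul_one_div]

lemma sum_liveCost_twoRate_le (hcard : 3 ≤ Fintype.card A) {a b : ℝ} (ha : 0 ≤ a) (hb : 0 ≤ b)
    (τ : Fin (L + 1) → c.Obs × A) :
    ∑ θ : c.Secret, liveCost (twoRate L a b) θ τ ≤
      (Fintype.card A : ℝ) ^ L * (a * (3 / (2 * Fintype.card A)) +
        b / (Fintype.card A : ℝ) ^ (L + 1 - c.depth - c.window)) := by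
  by_cases hlive : ∃ θ₀ : c.Secret, ∃ k₀ ≤ L + 1, Live θ₀ ((List.ofFn τ).take k₀)
  · obtain ⟨θ₀, k₀, hk₀, hlive₀⟩ := hlive
    exact sum_liveCost_twoRate_le_of_live hcard ha hb τ hk₀ hlive₀
  · push Not at hlive
    have hzero : ∀ θ : c.Secret, liveCost (twoRate L a b) θ τ = 0 := fun θ =>
      sum_eq_zero fun i _ => by rw [live, if_neg (hlive θ i i.2.le), zero_mul]
    rw [sum_eq_zero fun θ _ => hzero θ]
    positivity

lemma two_thirds_mul_le_card_secret (hcard : 3 ≤ Fintype.card A) :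
    2 / 3 * (c.leaves * c.window * (Fintype.card A : ℝ) ^ L) ≤ Fintype.card c.Secret := by
  have hq3 : (3 : ℝ) ≤ Fintype.card A := by exact_mod_cast hcard
  have hL : 0 < L := c.depth_add_window_lt.pos
  have hpasswords : ∀ i : Fin L, 2 / 3 * (Fintype.card A : ℝ) ^ L ≤
      #{p : Fin L → A | p i ≠ c.wait} := by
    intro i
    have hsplit := card_filter_add_card_filter_not (s := univ) fun p : Fin L → A => p i = c.wait
    have hwait := card_filter_forall_mem_eq {i} fun _ : Fin L => c.wait
    simp only [mem_singleton, forall_eq, card_compl, card_singleton, Fintype.card_fin] at hwait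
    rw [hwait, card_univ, Fintype.card_fun, Fintype.card_fin] at hsplit
    have hsplit' : (Fintype.card A : ℝ) ^ (L - 1) + #{p : Fin L → A | p i ≠ c.wait} =
        (Fintype.card A : ℝ) ^ L := by exact_mod_cast hsplit
    obtain ⟨l, rfl⟩ : ∃ l, L = l + 1 := ⟨L - 1, by omega⟩
    rw [Nat.add_sub_cancel, pow_succ] at hsplit'
    rw [pow_succ]
    nlinarith [show (0 : ℝ) < (Fintype.card A : ℝ) ^ l by positivity]
  have hsum : Fintype.card c.Secret = ∑ _x : Fin c.leaves, ∑ j : Fin c.window,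
      #{p : Fin L → A |
        p ⟨c.depth + j, by have := c.depth_add_window_lt; omega⟩ ≠ c.wait} := by
    refine (Fintype.card_subtype _).trans ?_
    simp only [card_filter, Fintype.sum_prod_type]
  rw [hsum]
  push_cast
  calc 2 / 3 * (c.leaves * c.window * (Fintype.card A : ℝ) ^ L)
      = ∑ _x : Fin c.leaves, ∑ _j : Fin c.window, 2 / 3 * (Fintype.card A : ℝ) ^ L := by
        simp only [sum_const, card_univ, Fintype.card_fin, nsmul_eq_mul]
        ring
    _ ≤ _ := sum_le_sum fun _ _ => sum_le_sum fun _ _ => hpasswords _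

lemma exists_secret (hwindow : 0 < c.window) (hcard : 3 ≤ Fintype.card A) {a b R : ℝ}
    (ha : 0 ≤ a) (hb : 0 ≤ b) {T : ℕ}
    (hsmall : T * (a * (3 / (2 * Fintype.card A)) +
      b / (Fintype.card A : ℝ) ^ (L + 1 - c.depth - c.window)) ≤
        R * (2 / 3 * (c.leaves * c.window)))
    {κ : List (Fin (L + 1) → c.Obs × A) → (Fin (L + 1) → c.Obs × A) → ℝ}
    (hκ0 : ∀ l x, 0 ≤ κ l x) (hκ : ∀ l, ∑ x, κ l x = 1) :
    ∃ θ : c.Secret, ∑ τs : Fin T → Fin (L + 1) → c.Obs × A,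
      seqProb κ τs * ∑ t, liveCost (twoRate L a b) θ (τs t) ≤ R := by
  have hleaves : (0 : ℝ) < c.leaves := Nat.cast_pos.2 c.leaves_pos
  have : (0 : ℝ) < c.window := Nat.cast_pos.2 hwindow
  have : (0 : ℝ) < Fintype.card A := Nat.cast_pos.2 (by omega)
  have hnum := two_thirds_mul_le_card_secret (c := c) hcard
  have hpos : (0 : ℝ) < Fintype.card c.Secret := lt_of_lt_of_le (by positivity) hnum
  have : Nonempty c.Secret := Fintype.card_pos_iff.1 (by exact_mod_cast hpos)
  obtain ⟨θ, hθ⟩ := exists_sum_seqProb_mul_sum_le hκ0 hκ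
    (fun τ => sum_liveCost_twoRate_le hcard ha hb τ) T
  refine ⟨θ, hθ.trans ((div_le_iff₀ hpos).2 ?_)⟩
  have hR : 0 ≤ R := by
    refine nonneg_of_mul_nonneg_left (le_trans ?_ hsmall) (by positivity)
    positivity
  calc _ = (Fintype.card A : ℝ) ^ L * (T * (a * (3 / (2 * Fintype.card A)) +
          b / (Fintype.card A : ℝ) ^ (L + 1 - c.depth - c.window))) := by ring
    _ ≤ (Fintype.card A : ℝ) ^ L * (R * (2 / 3 * (c.leaves * c.window))) := by gcongr
    _ = R * (2 / 3 * (c.leaves * c.window * (Fintype.card A : ℝ) ^ L)) := by ring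
    _ ≤ R * Fintype.card c.Secret := by gcongr

end Counting

end LockConfig

/-! ### The regret of an algorithm on the hard instances -/

namespace LockConfig

variable {A : Type} {L : ℕ} {c : LockConfig A L}

section CostRate

variable (c) in
/-- The rate at which the live indices of `T` episodes are charged.  It bounds the information
about the sign pattern, and adds `2 / T` for being live at the last index, so that a total charge of
at most `1` leaves at least half of the episodes without reward. -/
def costRate (T : ℕ) : ℕ → ℝ :=
  twoRate L (64 * c.entryProb ^ 2 * c.tiltSize ^ 2 / √c.pairs) (16 * c.entryProb ^ 2 + 2 / T)

lemma costRate_nonneg (T i : ℕ) : 0 ≤ c.costRate T i := by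
  unfold costRate twoRate
  split_ifs <;> positivity

lemma corrRate_le_mul_costRate (μ ν : Fin c.pairs → Bool) (T i : ℕ) :
    c.corrRate μ ν i ≤ (√c.pairs * |signCorr μ ν| + 1) / 4 * c.costRate T i := by
  have hpairs := Real.sqrt_pos.2 c.pairs_pos'
  unfold corrRate costRate twoRate pattern tiltScale
  split_ifs
  · calc _ ≤ 16 * c.entryProb ^ 2 * ((1 / 2) ^ 2 * 1) := by
          gcongr
          exact abs_signCorr_le_one _ _
      _ = 1 / 4 * (16 * c.entryProb ^ 2) := by ring
      _ ≤ _ := by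
          have hcorr : 0 ≤ √c.pairs * |signCorr μ ν| := by positivity
          gcongr
          · linarith
          · exact le_add_of_nonneg_right (by positivity)
  · calc _ ≤ 16 * c.entryProb ^ 2 * (c.tiltSize ^ 2 * |signCorr μ ν|) +
          16 * c.entryProb ^ 2 * c.tiltSize ^ 2 / √c.pairs :=
          le_add_of_nonneg_right (by positivity)
      _ = _ := by
          field_simp
          ring

variable [DecidableEq A]

lemma liveCost_costRate_le {T : ℕ} (hT : 1 ≤ T) (θ : c.Secret) (τ : Fin (L + 1) → c.Obs × A) :
    liveCost (c.costRate T) θ τ ≤ 3 := by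
  have hε : c.entryProb ^ 2 ≤ (1 / 8) ^ 2 := pow_le_pow_left₀ c.entryProb_nonneg c.entryProb_le 2
  have hpairs : 1 ≤ √c.pairs := Real.one_le_sqrt.2 (Nat.one_le_cast.2 c.pairs_pos)
  have hsize : L * c.tiltSize ^ 2 ≤ 3 / 5 := by
    have hL : L * c.tiltSize ≤ 3 / 5 := by linarith [c.tiltSize_le, c.tiltSize_pos]
    have hone : c.tiltSize ≤ 1 := by
      nlinarith [c.tiltSize_le, mul_nonneg L.cast_nonneg c.tiltSize_pos.le]
    nlinarith [c.tiltSize_pos]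
  have hearly : 64 * c.entryProb ^ 2 * c.tiltSize ^ 2 / √c.pairs ≤ c.tiltSize ^ 2 :=
    (div_le_self (by positivity) hpairs).trans (by nlinarith [sq_nonneg c.tiltSize])
  have hlast : 2 / (T : ℝ) ≤ 2 := div_le_self (by norm_num) (Nat.one_le_cast.2 hT)
  calc liveCost (c.costRate T) θ τ ≤ ∑ i : Fin (L + 1), c.costRate T i :=
        sum_le_sum fun i _ => mul_le_of_le_one_left (costRate_nonneg T i) (live_le_one _ _)
    _ = L * (64 * c.entryProb ^ 2 * c.tiltSize ^ 2 / √c.pairs) +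
        (16 * c.entryProb ^ 2 + 2 / T) := by
        rw [Fin.sum_univ_castSucc]
        simp [costRate, twoRate, ne_of_lt]
    _ ≤ L * c.tiltSize ^ 2 + (16 * (1 / 8) ^ 2 + 2) := by gcongr
    _ ≤ 3 := by linarith

lemma sum_live_take_last_le_half {T : ℕ} (hT : 1 ≤ T) (θ : c.Secret)
    {τs : Fin T → Fin (L + 1) → c.Obs × A} (hcost : ∑ t, liveCost (c.costRate T) θ (τs t) ≤ 1) :
    ∑ t, live θ ((List.ofFn (τs t)).take L) ≤ T / 2 := by
  have : (0 : ℝ) < T := Nat.cast_pos.2 hT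
  have hlast : ∀ τ : Fin (L + 1) → c.Obs × A,
      live θ ((List.ofFn τ).take L) * (2 / T) ≤ liveCost (c.costRate T) θ τ := fun τ =>
    calc live θ ((List.ofFn τ).take L) * (2 / T)
        ≤ live θ ((List.ofFn τ).take (Fin.last L)) * c.costRate T (Fin.last L) := by
          refine mul_le_mul_of_nonneg_left ?_ (live_nonneg _ _)
          rw [Fin.val_last, costRate, twoRate, if_pos rfl]
          exact le_add_of_nonneg_left (by positivity)
      _ ≤ liveCost (c.costRate T) θ τ :=
          single_le_sum (f := fun i : Fin (L + 1) => live θ ((List.ofFn τ).take i) * c.costRate T i)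
            (fun i _ => mul_nonneg (live_nonneg _ _) (costRate_nonneg T i)) (mem_univ _)
  have hsum := (sum_le_sum fun t _ => hlast (τs t)).trans hcost
  rw [← sum_mul, ← le_div_iff₀ (by positivity), one_div_div] at hsum
  exact hsum

end CostRate

section Regret

variable [Fintype A] [DecidableEq A]

variable (c) in
/-- The law of the next episode under the reference dynamics, given the previous episodes. -/
def refEpisodeKernel (𝔄 : Algorithm c.Obs A (L + 1)) (past : List (Fin (L + 1) → c.Obs × A))
    (τ : Fin (L + 1) → c.Obs × A) : ℝ :=
  seqProb (c.refKernel (𝔄.policyAt past)) τ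

lemma refEpisodeKernel_nonneg (𝔄 : Algorithm c.Obs A (L + 1))
    (past : List (Fin (L + 1) → c.Obs × A)) (τ : Fin (L + 1) → c.Obs × A) :
    0 ≤ c.refEpisodeKernel 𝔄 past τ :=
  seqProb_nonneg (refKernel_nonneg _) τ

lemma sum_refEpisodeKernel (𝔄 : Algorithm c.Obs A (L + 1))
    (past : List (Fin (L + 1) → c.Obs × A)) : ∑ τ, c.refEpisodeKernel 𝔄 past τ = 1 :=
  sum_seqProb (sum_refKernel _) _

lemma transcriptProb_model (θ : c.Secret) (μ : Fin c.pairs → Bool)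
    (𝔄 : Algorithm c.Obs A (L + 1)) {T : ℕ} (τs : Fin T → Fin (L + 1) → c.Obs × A) :
    (c.model θ μ).transcriptProb 𝔄 τs =
      seqProb (c.refEpisodeKernel 𝔄) τs * ∏ t, lik θ μ (List.ofFn (τs t)) := by
  rw [POMDP.transcriptProb_eq_seqProb]
  unfold seqProb
  rw [← prod_mul_distrib]
  exact prod_congr rfl fun t _ => trajProb_model θ μ _ _

lemma exists_pattern (𝔄 : Algorithm c.Obs A (L + 1)) {T : ℕ} (hT : 1 ≤ T) (θ : c.Secret)
    (hθ : ∑ τs : Fin T → Fin (L + 1) → c.Obs × A, seqProb (c.refEpisodeKernel 𝔄) τs *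
      ∑ t, liveCost (c.costRate T) θ (τs t) ≤ 1 / 64) :
    ∃ μ : Fin c.pairs → Bool, 1 / 2 ≤ ∑ τs : Fin T → Fin (L + 1) → c.Obs × A,
      seqProb (c.refEpisodeKernel 𝔄) τs * if ∑ t, liveCost (c.costRate T) θ (τs t) ≤ 1 then
        ∏ t, lik θ μ (List.ofFn (τs t)) else 0 := by
  have : Nonempty (Fin c.pairs) := ⟨0, c.pairs_pos⟩
  have hlik : ∀ (μ : Fin c.pairs → Bool) (past : List (Fin (L + 1) → c.Obs × A)),
      ∑ τ, c.refEpisodeKernel 𝔄 past τ * lik θ μ (List.ofFn τ) = 1 := fun μ past =>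
    sum_seqProb_mul_lik θ μ (𝔄.policyAt past) (L + 1)
  refine exists_half_le_sum_seqProb_mul_prod (C := 3) (K := 16)
    (Λ := fun μ τ => lik θ μ (List.ofFn τ))
    (B := fun μ ν => (√c.pairs * |signCorr μ ν| + 1) / 4)
    (refEpisodeKernel_nonneg 𝔄) (sum_refEpisodeKernel 𝔄) (by norm_num)
    (liveCost_nonneg (costRate_nonneg T) θ) (liveCost_costRate_le hT θ)
    (fun μ τ => lik_nonneg θ μ _) hlik
    (fun μ ν => by positivity) (fun μ ν past => ?_) (by norm_num) ?_
    (hθ.trans_eq (by norm_num))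
  · refine (sum_le_sum fun τ _ => ?_).trans
      (sum_seqProb_mul_lik_mul_lik_mul_exp_le θ μ ν (𝔄.policyAt past))
    refine mul_le_mul_of_nonneg_left (mul_le_mul_of_nonneg_left (Real.exp_le_exp.2 ?_)
      (mul_nonneg (lik_nonneg _ _ _) (lik_nonneg _ _ _))) (refEpisodeKernel_nonneg 𝔄 past τ)
    rw [neg_le_neg_iff, ← liveCost_const_mul]
    exact liveCost_mono (corrRate_le_mul_costRate μ ν T) θ τ
  · have hexp := sum_sum_exp_signCorr_le (ι := Fin c.pairs)
    rw [Fintype.card_fin] at hexp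
    convert hexp using 5
    ring

lemma entryProb_mul_div_forty_le_expRegret (θ : c.Secret) (μ : Fin c.pairs → Bool)
    (𝔄 : Algorithm c.Obs A (L + 1)) {T : ℕ} (hT : 1 ≤ T)
    (hμ : 1 / 2 ≤ ∑ τs : Fin T → Fin (L + 1) → c.Obs × A,
      seqProb (c.refEpisodeKernel 𝔄) τs * if ∑ t, liveCost (c.costRate T) θ (τs t) ≤ 1 then
        ∏ t, lik θ μ (List.ofFn (τs t)) else 0) :
    c.entryProb * T / 40 ≤ (c.model θ μ).expRegret 𝔄 T := by
  have hε := c.entryProb_nonneg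
  refine le_trans ?_ ((c.model θ μ).sum_transcriptProb_mul_sum_le_expRegret 𝔄 _
    (sum_trajProb_mul_miss_le θ μ) T)
  calc c.entryProb * T / 40 = 1 / 2 * (c.entryProb / 20 * T) := by ring
    _ ≤ _ := mul_le_mul_of_nonneg_right hμ (by positivity)
    _ ≤ _ := by
        rw [sum_mul]
        refine sum_le_sum fun τs _ => ?_
        rw [transcriptProb_model, mul_assoc, mul_assoc]
        refine mul_le_mul_of_nonneg_left ?_ (seqProb_nonneg (refEpisodeKernel_nonneg 𝔄) τs)
        have hlik : 0 ≤ ∏ t, lik θ μ (List.ofFn (τs t)) := prod_nonneg fun _ _ => lik_nonneg _ _ _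
        rw [← mul_sum, sum_sub_distrib, sum_const, card_univ, Fintype.card_fin, nsmul_one]
        split_ifs with hcost
        · have hhalf := sum_live_take_last_le_half hT θ hcost
          exact mul_le_mul_of_nonneg_left (by nlinarith) hlik
        · have hle : ∑ t, live θ ((List.ofFn (τs t)).take L) ≤ T :=
            (sum_le_sum fun t _ => live_le_one θ _).trans_eq (by simp)
          rw [zero_mul]
          exact mul_nonneg hlik (mul_nonneg (by positivity) (sub_nonneg.2 hle))

lemma exists_entryProb_mul_div_forty_le_expRegret (hwindow : 0 < c.window)
    (hcard : 3 ≤ Fintype.card A) {T : ℕ} (hT : 1 ≤ T)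
    (hsmall : T * (64 * c.entryProb ^ 2 * c.tiltSize ^ 2 / √c.pairs *
        (3 / (2 * Fintype.card A)) + (16 * c.entryProb ^ 2 + 2 / T) /
          (Fintype.card A : ℝ) ^ (L + 1 - c.depth - c.window)) ≤
      1 / 64 * (2 / 3 * (c.leaves * c.window)))
    (𝔄 : Algorithm c.Obs A (L + 1)) :
    ∃ (θ : c.Secret) (μ : Fin c.pairs → Bool),
      c.entryProb * T / 40 ≤ (c.model θ μ).expRegret 𝔄 T := by
  obtain ⟨θ, hθ⟩ := exists_secret hwindow hcard (by positivity) (by positivity) hsmall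
    (refEpisodeKernel_nonneg 𝔄) (sum_refEpisodeKernel 𝔄)
  obtain ⟨μ, hμ⟩ := exists_pattern 𝔄 hT θ hθ
  exact ⟨θ, μ, entryProb_mul_div_forty_le_expRegret θ μ 𝔄 hT hμ⟩

end Regret

end LockConfig

/-! ### The choice of the parameters -/

section HorizonBounds

variable {S H : ℕ}

lemma pow_four_le_two_pow_of_four_mul_logb_le (hS : 0 < S) (hH : 4 * Real.logb 2 S ≤ (H : ℝ)) :
    S ^ 4 ≤ 2 ^ H := by
  have hlog : Real.logb 2 ((S : ℝ) ^ 4) ≤ H := by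
    rw [Real.logb_pow]
    exact_mod_cast hH
  rw [Real.logb_le_iff_le_rpow (by norm_num) (by positivity), Real.rpow_natCast] at hlog
  exact_mod_cast hlog

lemma ten_le_of_four_mul_logb_le (hS : 5 ≤ S) (hH : 4 * Real.logb 2 S ≤ (H : ℝ)) : 10 ≤ H := by
  by_contra! hlt
  have hpow : 5 ^ 4 ≤ 2 ^ 9 := calc
    5 ^ 4 ≤ S ^ 4 := Nat.pow_le_pow_left hS 4
    _ ≤ 2 ^ H := pow_four_le_two_pow_of_four_mul_logb_le (by omega) hH
    _ ≤ 2 ^ 9 := Nat.pow_le_pow_right (by norm_num) (by omega)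
  norm_num at hpow

lemma lt_two_pow_of_four_mul_logb_le (hS : 0 < S) (hH : 4 * Real.logb 2 S ≤ (H : ℝ)) :
    S < 2 ^ (H / 4 + 1) := by
  refine lt_of_pow_lt_pow_left₀ 4 (by positivity)
    ((pow_four_le_two_pow_of_four_mul_logb_le hS hH).trans_lt ?_)
  rw [← pow_mul]
  exact Nat.pow_lt_pow_right (by norm_num) (by omega)

end HorizonBounds

section Charges

variable {S A H N T ε : ℝ}

lemma sq_mul_le_of_le_sqrt_mul {w X : ℝ} (hT : 0 < T) (hX : 0 ≤ X) (hw : 0 ≤ w)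
    (hwX : w ≤ √(X * T)) : (1 / 10000 * (w / T)) ^ 2 * T ≤ (1 / 10000) ^ 2 * X :=
  calc (1 / 10000 * (w / T)) ^ 2 * T = (1 / 10000) ^ 2 * (w ^ 2 / T) := by field_simp
    _ ≤ (1 / 10000) ^ 2 * X := by
        gcongr
        exact (div_le_iff₀ hT).2 ((Real.le_sqrt hw (by positivity)).1 hwX)

lemma early_charge_le {O P α : ℝ} (hα : 0 < α) (hA : 0 < A) (hP : 0 < P) (hSH : 0 ≤ S * H)
    (hSHN : S * H ≤ 30 * N) (hOP : √O ≤ 3 * √P)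
    (hε : ε ^ 2 * T ≤ (1 / 10000) ^ 2 * (S * √O * A * H / α ^ 2)) :
    T * (64 * ε ^ 2 * (3 * α) ^ 2 / √P * (3 / (2 * A))) ≤ N / 1000 := by
  have hsqrt : 0 < √P := Real.sqrt_pos.2 hP
  calc T * (64 * ε ^ 2 * (3 * α) ^ 2 / √P * (3 / (2 * A)))
      = 864 * (ε ^ 2 * T) * (α ^ 2 / (√P * A)) := by
        field_simp
        ring
    _ ≤ 864 * ((1 / 10000) ^ 2 * (S * √O * A * H / α ^ 2)) * (α ^ 2 / (√P * A)) := by gcongr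
    _ = 864 * (1 / 10000) ^ 2 * (S * H * (√O / √P)) := by field_simp
    _ ≤ 864 * (1 / 10000) ^ 2 * (30 * N * 3) := by
        gcongr
        · exact hSH.trans hSHN
        · exact (div_le_iff₀ hsqrt).2 hOP
    _ ≤ N / 1000 := by linarith

lemma last_charge_le {E Y : ℝ} (hT : 0 < T) (hE : 243 ≤ E) (hYE : Y ≤ E) (hN : 2 ≤ N)
    (hSH : 0 ≤ S * H) (hSHN : S * H ≤ 30 * N)
    (hε : ε ^ 2 * T ≤ (1 / 10000) ^ 2 * (S * Y * H)) :
    T * ((16 * ε ^ 2 + 2 / T) / E) ≤ N / 240 := by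
  have hE0 : 0 < E := by linarith
  have hfirst : ε ^ 2 * T / E ≤ (1 / 10000) ^ 2 * (30 * N) := by
    rw [div_le_iff₀ hE0]
    calc ε ^ 2 * T ≤ (1 / 10000) ^ 2 * (S * H * Y) := hε.trans_eq (by ring)
      _ ≤ (1 / 10000) ^ 2 * (S * H * E) := by gcongr
      _ ≤ (1 / 10000) ^ 2 * (30 * N * E) := by gcongr
      _ = (1 / 10000) ^ 2 * (30 * N) * E := by ring
  have hsecond : 2 / E ≤ N / 243 := by gcongr
  calc T * ((16 * ε ^ 2 + 2 / T) / E) = 16 * (ε ^ 2 * T / E) + 2 / E := by field_simp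
    _ ≤ N / 240 := by linarith

end Charges

namespace LockConfig

lemma exists_finite_isRevealing_family {A S' O' : Type} [Fintype A] [DecidableEq A] [Fintype S']
    [Fintype O'] {L T : ℕ} (c : LockConfig A L) (eS : c.State ≃ S') (eO : c.Obs ≃ O') {α r : ℝ}
    (hα : 0 < α) (hα' : α ≤ 1 / 6) (hsize : c.tiltSize = 3 * α)
    (hreg : ∀ 𝔄 : Algorithm c.Obs A (L + 1), ∃ (θ : c.Secret) (μ : Fin c.pairs → Bool),
      r ≤ (c.model θ μ).expRegret 𝔄 T) :
    ∃ ℳ : Set (POMDP S' O' A (L + 1)), ℳ.Finite ∧ (∀ M ∈ ℳ, M.IsRevealing 1 α) ∧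
      ∀ 𝔄 : Algorithm O' A (L + 1), ∃ M ∈ ℳ, r ≤ M.expRegret 𝔄 T := by
  refine ⟨Set.range fun p : c.Secret × (Fin c.pairs → Bool) => (c.model p.1 p.2).relabel eS eO,
    Set.finite_range _, ?_, fun 𝔄 => ?_⟩
  · rintro _ ⟨⟨θ, μ⟩, rfl⟩
    exact c.isRevealing_relabel_model hα hα' hsize eS eO θ μ
  · obtain ⟨𝔄, rfl⟩ := Algorithm.relabel_surjective eO 𝔄
    obtain ⟨θ, μ, h⟩ := hreg 𝔄
    exact ⟨_, ⟨(θ, μ), rfl⟩, h.trans_eq (POMDP.expRegret_relabel _ eS eO 𝔄 T).symm⟩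

variable {S O A L : ℕ} {α ε : ℝ}

/-- The parameters used for at most `S` latent states, at most `O` observations and `A` actions;
two of the states are lock states, and the quarters of the horizon leave half of it for the
password after the last entry. -/
def ofSizes (hS : 5 ≤ S) (hSO : S ≤ O) (hA : 3 ≤ A) (hL : 4 * Real.logb 2 S ≤ (L + 1 : ℕ))
    (hα : 0 < α) (hα' : α ≤ 1 / (5 * (L + 1 : ℕ))) (hε : 0 ≤ ε) (hε' : ε ≤ 1 / 8) :
    LockConfig (Fin A) L where
  leaves := S / 2 - 1
  pairs := O / 4
  depth := (L + 1) / 4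
  window := (L + 1) / 4
  wait := ⟨0, by omega⟩
  move := ⟨1, by omega⟩
  tiltSize := 3 * α
  entryProb := ε
  leaves_pos := by omega
  pairs_pos := by omega
  wait_ne_move := by simp
  tiltSize_pos := by positivity
  tiltSize_le := by
    rw [le_div_iff₀ (by positivity)] at hα'
    push_cast at hα'
    linarith
  entryProb_nonneg := hε
  entryProb_le := hε'
  leaves_le := by
    have hlt := lt_two_pow_of_four_mul_logb_le (by omega) hL
    rw [pow_succ] at hlt
    omega
  depth_add_window_lt := by
    have hten := ten_le_of_four_mul_logb_le hS hL
    omega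

lemma charge_ofSizes_le (hS : 5 ≤ S) (hSO : S ≤ O) (hA : 3 ≤ A)
    (hL : 4 * Real.logb 2 S ≤ (L + 1 : ℕ)) (hα : 0 < α) {T : ℕ} (hT : 1 ≤ T)
    (hearly : ε ^ 2 * T ≤ (1 / 10000) ^ 2 * (S * √O * A * (L + 1 : ℕ) / α ^ 2))
    (hlast : ε ^ 2 * T ≤ (1 / 10000) ^ 2 * (S * (A : ℝ) ^ (((L + 1 : ℕ) : ℝ) / 2) * (L + 1 : ℕ))) :
    T * (64 * ε ^ 2 * (3 * α) ^ 2 / √(O / 4 : ℕ) * (3 / (2 * A)) +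
        (16 * ε ^ 2 + 2 / T) / (A : ℝ) ^ (L + 1 - (L + 1) / 4 - (L + 1) / 4)) ≤
      1 / 64 * (2 / 3 * ((S / 2 - 1 : ℕ) * ((L + 1) / 4 : ℕ))) := by
  have hten := ten_le_of_four_mul_logb_le hS hL
  have hA' : (3 : ℝ) ≤ A := by exact_mod_cast hA
  have hSH : (S : ℝ) * (L + 1 : ℕ) ≤ 30 * ((S / 2 - 1 : ℕ) * ((L + 1) / 4 : ℕ)) := by
    have hleaves : S ≤ 5 * (S / 2 - 1) := by omega
    have hwindow : L + 1 ≤ 6 * ((L + 1) / 4) := by omega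
    exact_mod_cast (Nat.mul_le_mul hleaves hwindow).trans_eq (by ring)
  have hN : (2 : ℝ) ≤ (S / 2 - 1 : ℕ) * ((L + 1) / 4 : ℕ) := by
    exact_mod_cast Nat.mul_le_mul (show 1 ≤ S / 2 - 1 by omega) (show 2 ≤ (L + 1) / 4 by omega)
  have hOP : √(O : ℝ) ≤ 3 * √(O / 4 : ℕ) := by
    have hO : (O : ℝ) ≤ 3 ^ 2 * (O / 4 : ℕ) := by exact_mod_cast (by omega : O ≤ 3 ^ 2 * (O / 4))
    refine (Real.sqrt_le_sqrt hO).trans_eq ?_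
    rw [Real.sqrt_mul (by norm_num), Real.sqrt_sq (by norm_num)]
  have hpow : (243 : ℝ) ≤ (A : ℝ) ^ (L + 1 - (L + 1) / 4 - (L + 1) / 4) :=
    calc (243 : ℝ) = 3 ^ 5 := by norm_num
      _ ≤ (A : ℝ) ^ 5 := by gcongr
      _ ≤ _ := pow_le_pow_right₀ (by linarith) (by omega)
  have hhalf : (A : ℝ) ^ (((L + 1 : ℕ) : ℝ) / 2) ≤
      (A : ℝ) ^ (L + 1 - (L + 1) / 4 - (L + 1) / 4) := by
    rw [← Real.rpow_natCast]
    refine Real.rpow_le_rpow_of_exponent_le (by linarith) ((div_le_iff₀' two_pos).2 ?_)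
    exact_mod_cast (by omega : L + 1 ≤ 2 * (L + 1 - (L + 1) / 4 - (L + 1) / 4))
  have hT' : (0 : ℝ) < T := Nat.cast_pos.2 hT
  rw [mul_add]
  linarith [early_charge_le hα (by linarith) (Nat.cast_pos.2 (by omega)) (by positivity) hSH hOP
    hearly, last_charge_le hT' hpow hhalf hN (by positivity) hSH hlast]

end LockConfig

lemma exists_finite_isRevealing_family_of_le {S O A L : ℕ} (hS : 5 ≤ S) (hSO : S ≤ O) (hA : 3 ≤ A)
    (hL : 4 * Real.logb 2 S ≤ (L + 1 : ℕ)) {α : ℝ} (hα : 0 < α)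
    (hα' : α ≤ 1 / (5 * (L + 1 : ℕ))) {T : ℕ} (hT : 1 ≤ T) {w : ℝ} (hw : 0 ≤ w)
    (hearly : w ≤ √(S * √O * A * (L + 1 : ℕ) * T / α ^ 2))
    (hlast : w ≤ √(S * (A : ℝ) ^ (((L + 1 : ℕ) : ℝ) / 2) * (L + 1 : ℕ) * T)) (hwT : w ≤ T) :
    ∃ ℳ : Set (POMDP (Fin (S / 2 - 1 + 2)) (Fin (S / 2 - 1 + O / 4 * 2)) (Fin A) (L + 1)),
      ℳ.Finite ∧ (∀ M ∈ ℳ, M.IsRevealing 1 α) ∧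
      ∀ 𝔄 : Algorithm (Fin (S / 2 - 1 + O / 4 * 2)) (Fin A) (L + 1),
        ∃ M ∈ ℳ, 1 / 400000 * w ≤ M.expRegret 𝔄 T := by
  have hT' : (0 : ℝ) < T := Nat.cast_pos.2 hT
  have hten := ten_le_of_four_mul_logb_le hS hL
  have hε : 0 ≤ 1 / 10000 * (w / T) := by positivity
  have hε' : 1 / 10000 * (w / T) ≤ 1 / 8 := by linarith [(div_le_one hT').2 hwT]
  have hα6 : α ≤ 1 / 6 := hα'.trans (one_div_le_one_div_of_le (by norm_num) (by
    have : (10 : ℝ) ≤ (L + 1 : ℕ) := by exact_mod_cast hten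
    linarith))
  let c := LockConfig.ofSizes hS hSO hA hL hα hα' hε hε'
  let eS : c.State ≃ Fin (S / 2 - 1 + 2) := Fintype.equivOfCardEq (by simp [c, LockConfig.ofSizes])
  let eO : c.Obs ≃ Fin (S / 2 - 1 + O / 4 * 2) :=
    Fintype.equivOfCardEq (by simp [c, LockConfig.ofSizes])
  refine c.exists_finite_isRevealing_family eS eO hα hα6 rfl fun 𝔄 => ?_
  have hwindow : 0 < c.window := by change 0 < (L + 1) / 4; omega
  have hcharge := LockConfig.charge_ofSizes_le hS hSO hA hL hα hT
    (sq_mul_le_of_le_sqrt_mul hT' (by positivity) hw (by rwa [div_mul_eq_mul_div]))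
    (sq_mul_le_of_le_sqrt_mul hT' (by positivity) hw hlast)
  obtain ⟨θ, μ, hreg⟩ := c.exists_entryProb_mul_div_forty_le_expRegret hwindow (by simpa) hT
    (by rw [Fintype.card_fin]; exact hcharge) 𝔄
  refine ⟨θ, μ, hreg.trans_eq' ?_⟩
  change 1 / 10000 * (w / T) * T / 40 = 1 / 400000 * w
  field_simp
  ring

/-- **Regret lower bound for single-step revealing POMDPs** (Corollary 5.1).
There is an absolute constant `c₀ > 0` such that for all `O ≥ S ≥ 5`, `A ≥ 3`,
`H ≥ 4 log₂ S`, `α ∈ (0, 1/(5H)]` and `T ≥ 1`, there is a finite family `ℳ` of single-step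
`α`-revealing POMDPs with `|𝒮| ≤ S`, `|𝒪| ≤ O`, `|𝒜| = A` such that every `T`-episode
algorithm suffers expected regret at least
`c₀ · min{ (S·√O·A·H·T/α²)^{1/2}, (S·A^{H/2}·H·T)^{1/2}, T }` on some member of `ℳ`. -/
theorem one_step_revealing_regret_lower_bound :
    ∃ c₀ : ℝ, 0 < c₀ ∧
      ∀ (S O A H : ℕ), 5 ≤ S → S ≤ O → 3 ≤ A →
        4 * Real.logb 2 S ≤ (H : ℝ) →
        ∀ α : ℝ, 0 < α → α ≤ 1 / (5 * H) →
        ∀ T : ℕ, 1 ≤ T →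
        ∃ (σ ω : ℕ), 0 < σ ∧ σ ≤ S ∧ 0 < ω ∧ ω ≤ O ∧
          ∃ ℳ : Set (POMDP (Fin σ) (Fin ω) (Fin A) H),
            ℳ.Finite ∧
            (∀ M ∈ ℳ, M.IsRevealing 1 α) ∧
            ∀ 𝔄 : Algorithm (Fin ω) (Fin A) H,
              ∃ M ∈ ℳ,
                c₀ *
                    min
                      (Real.sqrt ((S : ℝ) * Real.sqrt O * A * H * T / α ^ 2))
                      (min (Real.sqrt ((S : ℝ) * (A : ℝ) ^ ((H : ℝ) / 2) * H * T)) (T : ℝ)) ≤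
                  M.expRegret 𝔄 T := by
  refine ⟨1 / 400000, by norm_num, fun S O A H hS hSO hA hH α hα hα' T hT => ?_⟩
  have hten := ten_le_of_four_mul_logb_le hS hH
  obtain ⟨L, rfl⟩ : ∃ L, H = L + 1 := ⟨H - 1, by omega⟩
  exact ⟨S / 2 - 1 + 2, S / 2 - 1 + O / 4 * 2, by omega, by omega, by omega, by omega,
    exists_finite_isRevealing_family_of_le hS hSO hA hH hα hα' hT (by positivity)
      (min_le_left _ _) ((min_le_right _ _).trans (min_le_left _ _))
      ((min_le_right _ _).trans (min_le_right _ _))⟩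
end
end

section
/- Let A ≥ 3 and A₁ be integers with 1 ≤ A₁ ≤ 1 + ⌊A/6⌋, let n, m ≥ 1 be integers, and let H be an integer with H ≥ 10n. Set H₀ := ⌊(H−n)/m⌋, let l be an integer with 0 ≤ l ≤ ⌊H/(10m)⌋, and set h⋆ := n + m·l; assume h⋆ < H. Let 𝒜 be a set of A actions and 𝒜_tr ⊆ 𝒜 a subset of size A − A₁, and let ℋ_{>h⋆} := { h : h = n + j·m for some integer j > l, and h < H }. Then the set 𝒜_code := { a = (a_{h⋆+1},…,a_{H−1}) ∈ 𝒜^{H−h⋆−1} : a_h ∈ 𝒜_tr for all h ∈ ℋ_{>h⋆} } has cardinality |𝒜_code| ≥ A^{H/2 − 1} (an inequality of real numbers, with real exponent H/2 − 1). -/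
/-!
Constrain every coordinate to the allowed actions instead of only those in `ℋ_{>h⋆}`: with
`B = A - A₁` allowed actions this still leaves `B ^ N` sequences of length `N = H - h⋆ - 1`.
At most `1 + ⌊A / 6⌋` actions are forbidden, so `2 * A ≤ 3 * B`; as `3 ^ 8 ≤ 2 ^ 8 * A ^ 3`, this
gives `A ^ (5 / 8) ≤ B`. Since `h⋆ ≤ H / 5` gives `N ≥ 4 * H / 5 - 1`, we conclude
`B ^ N ≥ A ^ (5 / 8 * N) ≥ A ^ (H / 2 - 5 / 8) ≥ A ^ (H / 2 - 1)`.
-/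

open Finset

theorem card_pow_card_le_card_subtype_forall_imp_mem {ι α : Type*} [Finite ι] [Finite α]
    (S : Finset α) (p : ι → Prop) :
    #S ^ Nat.card ι ≤ Nat.card {f : ι → α // ∀ i, p i → f i ∈ S} :=
  calc #S ^ Nat.card ι = Nat.card (ι → S) := by simp [Nat.card_fun]
    _ = Nat.card {f : ι → α // ∀ i, f i ∈ S} := Nat.card_congr Equiv.subtypePiEquivPi.symm
    _ ≤ Nat.card {f : ι → α // ∀ i, p i → f i ∈ S} :=
      Finite.card_le_of_embedding (Subtype.impEmbedding _ _ fun _ hf i _ => hf i)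

theorem rpow_div_le_of_pow_le_pow {x y : ℝ} (hx : 0 ≤ x) (hy : 0 ≤ y) {p q : ℕ} (hq : q ≠ 0)
    (h : x ^ p ≤ y ^ q) : x ^ (p / q : ℝ) ≤ y := by
  rw [div_eq_mul_inv, Real.rpow_mul hx, Real.rpow_natCast,
    Real.rpow_inv_le_iff_of_pos (by positivity) hy (by positivity), Real.rpow_natCast]
  exact h

theorem pow_five_le_pow_eight {A B : ℕ} (hA : 3 ≤ A) (hB : A ≤ B + (1 + A / 6)) :
    A ^ 5 ≤ B ^ 8 := by
  have hratio : 2 * A ≤ 3 * B := by omega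
  have hscaled : 3 ^ 8 * A ^ 5 ≤ 3 ^ 8 * B ^ 8 :=
    calc 3 ^ 8 * A ^ 5 ≤ 2 ^ 8 * 3 ^ 3 * A ^ 5 := by gcongr; norm_num
      _ ≤ 2 ^ 8 * A ^ 3 * A ^ 5 := by gcongr
      _ = (2 * A) ^ 8 := by ring
      _ ≤ (3 * B) ^ 8 := by gcongr
      _ = 3 ^ 8 * B ^ 8 := by ring
  exact Nat.le_of_mul_le_mul_left hscaled (by norm_num)

theorem card_rpow_le_card_subtype_forall_imp_mem {ι α : Type*} [Finite ι] [Fintype α]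
    (hα : 3 ≤ Fintype.card α) (S : Finset α)
    (hS : Fintype.card α ≤ #S + (1 + Fintype.card α / 6)) (p : ι → Prop) :
    (Fintype.card α : ℝ) ^ (5 / 8 * Nat.card ι : ℝ) ≤
      Nat.card {f : ι → α // ∀ i, p i → f i ∈ S} := by
  have hpow : (Fintype.card α : ℝ) ^ 5 ≤ (#S : ℝ) ^ 8 := mod_cast pow_five_le_pow_eight hα hS
  have hroot : (Fintype.card α : ℝ) ^ (5 / 8 : ℝ) ≤ #S :=
    mod_cast rpow_div_le_of_pow_le_pow (by positivity) (by positivity) (by norm_num) hpow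
  calc (Fintype.card α : ℝ) ^ (5 / 8 * Nat.card ι : ℝ)
      = ((Fintype.card α : ℝ) ^ (5 / 8 : ℝ)) ^ Nat.card ι :=
        Real.rpow_mul_natCast (by positivity) _ _
    _ ≤ (#S : ℝ) ^ Nat.card ι := by gcongr
    _ ≤ Nat.card {f : ι → α // ∀ i, p i → f i ∈ S} :=
      mod_cast card_pow_card_le_card_subtype_forall_imp_mem S p

theorem five_mul_add_mul_le {n m l H : ℕ} (hn : 10 * n ≤ H) (hl : l ≤ H / (10 * m)) :
    5 * (n + m * l) ≤ H := by
  have hml : l * (10 * m) ≤ H := Nat.mul_le_of_le_div _ _ _ hl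
  linarith

theorem password_count_lower_bound_general {α : Type*} [Fintype α] (hα : 3 ≤ Fintype.card α)
    (S : Finset α) (hS : Fintype.card α ≤ #S + (1 + Fintype.card α / 6))
    {h H : ℕ} (hH : 5 * h ≤ H) (p : Fin (H - h - 1) → Prop) :
    (Fintype.card α : ℝ) ^ ((H : ℝ) / 2 - 1) ≤
      Nat.card {f : Fin (H - h - 1) → α // ∀ i, p i → f i ∈ S} := by
  have hlength : 4 * (H : ℝ) ≤ 5 * (H - h - 1 : ℕ) + 5 := by
    exact_mod_cast (by omega : 4 * H ≤ 5 * (H - h - 1) + 5)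
  have hone : (1 : ℝ) ≤ Fintype.card α := mod_cast (by omega : 1 ≤ Fintype.card α)
  calc (Fintype.card α : ℝ) ^ ((H : ℝ) / 2 - 1)
      ≤ (Fintype.card α : ℝ) ^ (5 / 8 * Nat.card (Fin (H - h - 1)) : ℝ) :=
        Real.rpow_le_rpow_of_exponent_le hone (by rw [Nat.card_fin]; linarith)
    _ ≤ Nat.card {f : Fin (H - h - 1) → α // ∀ i, p i → f i ∈ S} :=
      card_rpow_le_card_subtype_forall_imp_mem hα S hS p

/-- **Lemma D.1 (counting passwords).** With `h⋆ = n + m·l < H`, `l ≤ ⌊H/(10m)⌋`,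
`H ≥ 10n`, `A₁ ≤ 1 + ⌊A/6⌋`, and `𝒜_tr ⊆ 𝒜` of size `A − A₁`, the set of action sequences
`a ∈ 𝒜^{H−h⋆−1}` (indexed by positions `h⋆+1, …, H−1`) whose entries at positions
`h ∈ ℋ_{>h⋆} = {n + j·m : j > l, h < H}` lie in `𝒜_tr` has cardinality at least
`A^{H/2−1}`. -/
theorem password_count_lower_bound (A A₁ n m H : ℕ) (hA : 3 ≤ A) (hA₁ : 1 ≤ A₁)
    (hA₁' : A₁ ≤ 1 + A / 6) (hn : 1 ≤ n) (hm : 1 ≤ m) (hH : 10 * n ≤ H)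
    (l : ℕ) (hl : l ≤ H / (10 * m)) (hstar : n + m * l < H)
    (α : Type) [Fintype α] (hcard : Fintype.card α = A)
    (Atr : Finset α) (hAtr : Atr.card = A - A₁) :
    (A : ℝ) ^ ((H : ℝ) / 2 - 1) ≤
      (Nat.card {f : Fin (H - (n + m * l) - 1) → α //
        ∀ i : Fin (H - (n + m * l) - 1),
          ((∃ j : ℕ, l < j ∧ n + m * l + 1 + i.1 = n + j * m) ∧ n + m * l + 1 + i.1 < H) →
            f i ∈ Atr} : ℝ) := by
  subst hcard
  exact password_count_lower_bound_general hA Atr (by omega) (five_mul_add_mul_le hH hl) _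
end

section
/- Let M be a finite episodic POMDP with horizon H, let m ≥ 1, let h ∈ {1,…,H−m}, and fix an action sequence a ∈ 𝒜^{m}. Define the matrix 𝕄_{h,a} ∈ ℝ^{𝒪^{m+1}×𝒮} by [𝕄_{h,a}]_{ω,s} := ℙ_M(o_{h:h+m} = ω | s_h = s, a_{h:h+m−1} = a). If there exists B ∈ ℝ^{𝒮×𝒪^{m+1}} with B·𝕄_{h,a}·𝕋_{h−1} = 𝕋_{h−1}, then the (m+1)-step emission-action matrix 𝕄_{h,m+1} admits a generalized left inverse B' (i.e., B'·𝕄_{h,m+1}·𝕋_{h−1} = 𝕋_{h−1}) with ‖B'‖_{*→1} ≤ ‖B‖_{1→1}, where ‖B‖_{1→1} := max_{‖y‖₁≤1} ‖By‖₁. -/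
/-!
Restricting a vector `x` indexed by pairs `(ω, a')` to the slice `a' = a` is multiplication by a
`0`-`1` matrix `P` with `P * 𝕄_{h,m+1} = 𝕄_{h,a}`, so `B' = B * P` is a generalized left inverse.
One of the squares summed in `‖x‖_*²` is `‖P x‖₁²`, so `P` is a contraction from `‖·‖_*` to
`‖·‖₁`, and hence `‖B * P‖_{*→1} ≤ ‖B‖_{1→1}`.
-/

open Finset

noncomputable section

section SliceMatrix

open scoped Matrix

variable (R ι : Type*) {κ : Type*} [DecidableEq ι] [DecidableEq κ]

/-- The matrix of the restriction `x ↦ x (·, k)` to the slice at `k`, obtained by keeping the rows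
`(i, k)` of the identity matrix. -/
def sliceMatrix [Zero R] [One R] (k : κ) : Matrix ι (ι × κ) R :=
  (1 : Matrix (ι × κ) (ι × κ) R).submatrix (fun i => (i, k)) id

variable {R ι} [NonAssocSemiring R] [Fintype ι] [Fintype κ]

lemma sliceMatrix_mul {n : Type*} (k : κ) (N : Matrix (ι × κ) n R) :
    sliceMatrix R ι k * N = N.submatrix (fun i => (i, k)) id :=
  Matrix.one_submatrix_mul _ (Equiv.refl _) N

lemma sliceMatrix_mulVec (k : κ) (x : ι × κ → R) :
    sliceMatrix R ι k *ᵥ x = fun i => x (i, k) :=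
  (Matrix.submatrix_mulVec_equiv 1 x _ (Equiv.refl _)).trans <| by
    rw [Matrix.one_mulVec]
    rfl

end SliceMatrix

section OperatorNorms

open scoped Matrix

lemma sum_abs_mulVec_le {R m n : Type*} [Ring R] [LinearOrder R] [IsOrderedRing R]
    [Fintype m] [Fintype n] (B : Matrix m n R) (v : n → R) :
    ∑ i, |(B *ᵥ v) i| ≤ (∑ i, ∑ j, |B i j|) * ∑ j, |v j| := by
  simp only [Finset.sum_mul]
  refine Finset.sum_le_sum fun i _ => ?_
  calc |(B *ᵥ v) i| ≤ ∑ j, |B i j * v j| := Finset.abs_sum_le_sum_abs _ _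
    _ ≤ ∑ j, |B i j| * ∑ k, |v k| := Finset.sum_le_sum fun j hj => by
      rw [abs_mul]
      gcongr
      exact Finset.single_le_sum (f := fun k => |v k|) (fun _ _ => abs_nonneg _) hj

lemma sum_abs_mulVec_le_opNormOneOne {m n : Type} [Fintype m] [Fintype n] (B : Matrix m n ℝ)
    {v : n → ℝ} (hv : ∑ j, |v j| ≤ 1) : ∑ i, |(B *ᵥ v) i| ≤ opNormOneOne B := by
  refine le_csSup ⟨∑ i, ∑ j, |B i j|, ?_⟩ ⟨v, hv, rfl⟩
  rintro _ ⟨w, hw, rfl⟩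
  exact (sum_abs_mulVec_le B w).trans (mul_le_of_le_one_right (by positivity) hw)

variable {ι κ : Type} [Fintype ι] [Fintype κ]

lemma starNorm_zero : starNorm (0 : ι × κ → ℝ) = 0 := by
  simp [starNorm]

lemma sum_abs_slice_le_starNorm (k : κ) (x : ι × κ → ℝ) : ∑ i, |x (i, k)| ≤ starNorm x :=
  Real.le_sqrt_of_sq_le <|
    Finset.single_le_sum (f := fun k => (∑ i, |x (i, k)|) ^ 2) (fun _ _ => sq_nonneg _)
      (Finset.mem_univ k)

lemma sum_abs_sliceMatrix_mulVec_le_starNorm [DecidableEq ι] [DecidableEq κ] (k : κ)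
    (x : ι × κ → ℝ) : ∑ i, |(sliceMatrix ℝ ι k *ᵥ x) i| ≤ starNorm x := by
  rw [sliceMatrix_mulVec]
  exact sum_abs_slice_le_starNorm k x

lemma opNormStarOne_mul_le {m n : Type} [Fintype m] [Fintype n] (B : Matrix m n ℝ)
    (C : Matrix n (ι × κ) ℝ) (hC : ∀ x, ∑ i, |(C *ᵥ x) i| ≤ starNorm x) :
    opNormStarOne (B * C) ≤ opNormOneOne B := by
  refine csSup_le ⟨_, 0, starNorm_zero.trans_le zero_le_one, rfl⟩ ?_
  rintro _ ⟨x, hx, rfl⟩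
  rw [← Matrix.mulVec_mulVec]
  exact sum_abs_mulVec_le_opNormOneOne B ((hC x).trans hx)

end OperatorNorms

lemma POMDP.isGenLeftInv_mul_sliceMatrix_iff {S O A : Type} [Fintype S] [Fintype O] [Fintype A]
    [DecidableEq O] [DecidableEq A] {H : ℕ} (M : POMDP S O A H) (h m : ℕ)
    (a : Fin (m - 1) → A) (B : Matrix S (Fin m → O) ℝ) :
    M.IsGenLeftInv h m (B * sliceMatrix ℝ (Fin m → O) a) ↔
      ∀ c ∈ M.stepCols h,
        (B * Matrix.of fun (ω : Fin m → O) s => M.emitActProb m h s ω a).mulVec c = c := by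
  have hslice : sliceMatrix ℝ (Fin m → O) a * M.emitActMatrix h m =
      Matrix.of fun ω s => M.emitActProb m h s ω a := sliceMatrix_mul a _
  rw [POMDP.IsGenLeftInv, Matrix.mul_assoc, hslice]

/-- **Lemma E.1 (a single revealing action sequence suffices).**
If, for a fixed action sequence `a ∈ 𝒜^m`, the matrix `𝕄_{h,a} ∈ ℝ^{𝒪^{m+1}×𝒮}` of
observation-sequence probabilities admits a `B` with `B·𝕄_{h,a}·𝕋_{h−1} = 𝕋_{h−1}`, then
the `(m+1)`-step emission–action matrix `𝕄_{h,m+1}` admits a generalized left inverse `B'`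
with `‖B'‖_{*→1} ≤ ‖B‖_{1→1}`. -/
theorem genLeftInv_of_single_action_sequence {S O A : Type} [Fintype S] [Fintype O]
    [Fintype A] {H : ℕ} (M : POMDP S O A H) (m h : ℕ) (hm : 1 ≤ m)
    (hh : h ∈ Finset.Icc 1 (H - m)) (a : Fin m → A)
    (B : Matrix S (Fin (m + 1) → O) ℝ)
    (hB : ∀ c ∈ M.stepCols h,
      (B * Matrix.of fun (ω : Fin (m + 1) → O) s => M.emitActProb (m + 1) h s ω a).mulVec c
        = c) :
    ∃ B' : Matrix S ((Fin (m + 1) → O) × (Fin (m + 1 - 1) → A)) ℝ,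
      M.IsGenLeftInv h (m + 1) B' ∧ opNormStarOne B' ≤ opNormOneOne B := by
  classical
  exact ⟨B * sliceMatrix ℝ (Fin (m + 1) → O) a,
    (M.isGenLeftInv_mul_sliceMatrix_iff h (m + 1) a B).2 hB,
    opNormStarOne_mul_le B _ (sum_abs_sliceMatrix_mulVec_le_starNorm _)⟩
end
end
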